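/- For every n ≥ 1 the dual canonical basis elements satisfy B[n,0,0,n] = q^{n−1} B[n,0,0,n−1] u₀ − q^{2n} B[n−1,1,0,n−1] u₁ = q^{3n−1} u₀ B[n,0,0,n−1] − q^{2n−2} u₁ B[n−1,1,0,n−1] = q^{n−1} u₃ B[n−1,0,0,n] − q^{2n} u₂ B[n−1,0,1,n−1] = q^{3n−1} B[n−1,0,0,n] u₃ − q^{2n−2} B[n−1,0,1,n−1] u₂. -/

import Mathlib

noncomputable section

abbrev F : Type := RatFunc ℚ

/-- The deformation parameter `q`. -/
def qq : F := RatFunc.X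

/-- The quantum integer `[3] = q² + 1 + q⁻²`. -/
def box3 : F := qq ^ 2 + 1 + (qq⁻¹) ^ 2

/-- The generators `E₁, E₂` of the free algebra. -/
def gen (i : Fin 2) : FreeAlgebra F (Fin 2) := FreeAlgebra.ι F i

/-- The quantized Serre relations. -/
inductive SerreRel : FreeAlgebra F (Fin 2) → FreeAlgebra F (Fin 2) → Prop
  | rel1 : SerreRel
      (gen 0 ^ 3 * gen 1 - box3 • (gen 0 ^ 2 * gen 1 * gen 0)
        + box3 • (gen 0 * gen 1 * gen 0 ^ 2) - gen 1 * gen 0 ^ 3) 0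
  | rel2 : SerreRel
      (gen 1 ^ 3 * gen 0 - box3 • (gen 1 ^ 2 * gen 0 * gen 1)
        + box3 • (gen 1 * gen 0 * gen 1 ^ 2) - gen 0 * gen 1 ^ 3) 0

/-- `U = U_q(𝔫)`, the free algebra on `E₁, E₂` modulo the quantized Serre relations. -/
abbrev U : Type := RingQuot SerreRel

def E1 : U := RingQuot.mkAlgHom F SerreRel (gen 0)
def E2 : U := RingQuot.mkAlgHom F SerreRel (gen 1)

/-- `A = (1/(q+q⁻¹))(E₂E₁ − q⁻²E₁E₂)`. -/
def Aelt : U := (qq + qq⁻¹)⁻¹ • (E2 * E1 - (qq⁻¹) ^ 2 • (E1 * E2))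

def v0 : U := E1
def v1 : U := Aelt * v0 - v0 * Aelt
def v2 : U := Aelt * v1 - v1 * Aelt
def v3 : U := Aelt * v2 - v2 * Aelt

/-- `uᵢ = (1 − q⁻²)⁻²ⁱ vᵢ`. -/
def u0 : U := v0
def u1 : U := ((1 - (qq⁻¹) ^ 2)⁻¹) ^ 2 • v1
def u2 : U := ((1 - (qq⁻¹) ^ 2)⁻¹) ^ 4 • v2
def u3 : U := ((1 - (qq⁻¹) ^ 2)⁻¹) ^ 6 • v3

/-- `p₁ = u₃u₁ − q²u₂²`. -/
def p1 : U := u3 * u1 - qq ^ 2 • u2 ^ 2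
/-- `p₀ = u₂u₀ − q²u₁²`. -/
def p0 : U := u2 * u0 - qq ^ 2 • u1 ^ 2

/-- `S`, the subalgebra of `U` generated by `u₀, u₁, u₂, u₃`. -/
abbrev Sgen : Subalgebra F U := Algebra.adjoin F ({u0, u1, u2, u3} : Set U)

def us0 : Sgen := ⟨u0, Algebra.subset_adjoin (by simp)⟩
def us1 : Sgen := ⟨u1, Algebra.subset_adjoin (by simp)⟩
def us2 : Sgen := ⟨u2, Algebra.subset_adjoin (by simp)⟩
def us3 : Sgen := ⟨u3, Algebra.subset_adjoin (by simp)⟩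

/-- `p₁ = u₃u₁ − q²u₂²` as an element of `S`. -/
def ps1 : Sgen := us3 * us1 - qq ^ 2 • us2 ^ 2
/-- `p₀ = u₂u₀ − q²u₁²` as an element of `S`. -/
def ps0 : Sgen := us2 * us0 - qq ^ 2 • us1 ^ 2

/-- Index quadruples `a = (a₃, a₂, a₁, a₀)`. -/
abbrev Idx : Type := ℕ × ℕ × ℕ × ℕ

/-- The PBW monomial `u₃^{a₃}u₂^{a₂}u₁^{a₁}u₀^{a₀}`. -/
def mon (a : Idx) : Sgen := us3 ^ a.1 * us2 ^ a.2.1 * us1 ^ a.2.2.1 * us0 ^ a.2.2.2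

/-- `b(a) = C(a₃,2)+C(a₂,2)+C(a₁,2)+C(a₀,2)`. -/
def bexp (a : Idx) : ℕ :=
  Nat.choose a.1 2 + Nat.choose a.2.1 2 + Nat.choose a.2.2.1 2 + Nat.choose a.2.2.2 2

/-- The dual PBW basis element `E[a] = q^{b(a)} u₃^{a₃}u₂^{a₂}u₁^{a₁}u₀^{a₀}`. -/
def Ee (a : Idx) : Sgen := qq ^ bexp a • mon a

/-- `N(a) = (a₃+a₂+a₁+a₀)² − 7a₃ − 5a₂ − 3a₁ − a₀`. -/
def Nnum (a : Idx) : ℤ :=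
  ((a.1 : ℤ) + a.2.1 + a.2.2.1 + a.2.2.2) ^ 2
    - 7 * a.1 - 5 * a.2.1 - 3 * a.2.2.1 - a.2.2.2

/-- `a ⊴ b` iff `b − a ∈ ℕ·(−1,2,−1,0) + ℕ·(0,−1,2,−1)`. -/
def tri (a b : Idx) : Prop :=
  ∃ s r : ℕ,
    (b.1 : ℤ) = a.1 - s ∧
    (b.2.1 : ℤ) = a.2.1 + 2 * s - r ∧
    (b.2.2.1 : ℤ) = a.2.2.1 - s + 2 * r ∧
    (b.2.2.2 : ℤ) = a.2.2.2 - r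

/-- `S(a) = {b ∈ ℕ⁴ : a ⊴ b and a ≠ b}`. -/
def Sset (a : Idx) : Set Idx := {b | tri a b ∧ a ≠ b}

/-- Condition (i): `B[a] − E[a] ∈ Σ_{b ∈ S(a)} qℤ[q]·E[b]`. -/
def cond1 (B : Idx → Sgen) (a : Idx) : Prop :=
  ∃ φ : Idx →₀ Polynomial ℤ,
    (↑φ.support : Set Idx) ⊆ Sset a ∧
    B a - Ee a =
      φ.sum fun b p => (qq * Polynomial.eval₂ (Int.castRingHom F) qq p) • Ee b

/-- Hypotheses on the bar involution of coefficients `bar : q ↦ q⁻¹` and on the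
anti-automorphism `σ` of `S`: `σ` is an additive, anti-multiplicative bijection with
`σ(c(q)·x) = c(q⁻¹)·σ(x)` and `σ(uᵢ) = q^{2i}uᵢ`. -/
def SigmaHyp (bar : F →+* F) (σ : Sgen → Sgen) : Prop :=
  bar qq = qq⁻¹ ∧
  Function.Bijective σ ∧
  (∀ x y : Sgen, σ (x + y) = σ x + σ y) ∧
  (∀ x y : Sgen, σ (x * y) = σ y * σ x) ∧
  (∀ (c : F) (x : Sgen), σ (c • x) = bar c • σ x) ∧
  σ us0 = us0 ∧ σ us1 = qq ^ 2 • us1 ∧ σ us2 = qq ^ 4 • us2 ∧ σ us3 = qq ^ 6 • us3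

/-- The defining properties of the dual canonical basis `B`: for every `a ∈ ℕ⁴`,
`B[a] − E[a] ∈ Σ_{b ∈ S(a)} qℤ[q]·E[b]` and `σ(B[a]) = q^{−N(a)}B[a]`. -/
def DCB (bar : F →+* F) (σ : Sgen → Sgen) (B : Idx → Sgen) : Prop :=
  ∀ a : Idx, cond1 B a ∧ σ (B a) = qq ^ (-Nnum a) • B a

/-- Extension of `B` to integer quadruples by the convention that `B[a] = 0` whenever
some coordinate of `a` is negative. -/
def Bz (B : Idx → Sgen) (a : ℤ × ℤ × ℤ × ℤ) : Sgen :=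
  if 0 ≤ a.1 ∧ 0 ≤ a.2.1 ∧ 0 ≤ a.2.2.1 ∧ 0 ≤ a.2.2.2 then
    B (a.1.toNat, a.2.1.toNat, a.2.2.1.toNat, a.2.2.2.toNat)
  else 0

set_option linter.unusedSimpArgs false

section generic
variable {K R : Type*} [Field K] [Ring R] [Algebra K R]

/-- straightening relations -/
structure QRel (q : K) (u0 u1 u2 u3 : R) : Prop where
  r01 : u0 * u1 = (q⁻¹ ^ 2) • (u1 * u0)
  r12 : u1 * u2 = (q⁻¹ ^ 2) • (u2 * u1)
  r23 : u2 * u3 = (q⁻¹ ^ 2) • (u3 * u2)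
  r02 : u0 * u2 = (q⁻¹ ^ 2) • (u2 * u0) - (1 - q⁻¹ ^ 2) • (u1 * u1)
  r13 : u1 * u3 = (q⁻¹ ^ 2) • (u3 * u1) - (1 - q⁻¹ ^ 2) • (u2 * u2)
  r03 : u0 * u3 = (q⁻¹ ^ 2) • (u3 * u0) - (1 - q⁻¹ ^ 4) • (u2 * u1)

theorem asc {c : K} {x y w : R} (h : x * y = c • w) (t : R) : x * (y * t) = c • (w * t) := by
  rw [← mul_assoc, h, smul_mul_assoc]
theorem asc2 {c d : K} {x y w v : R} (h : x * y = c • w - d • v) (t : R) :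
    x * (y * t) = c • (w * t) - d • (v * t) := by
  rw [← mul_assoc, h, sub_mul, smul_mul_assoc, smul_mul_assoc]

/-- consequences -/
structure QId (q : K) (u0 u1 u2 u3 p0 p1 z c : R) : Prop where
  hp1 : p1 = u3 * u1 - q ^ 2 • (u2 * u2)
  hp0 : p0 = u2 * u0 - q ^ 2 • (u1 * u1)
  hz : z = u3 * u0 - q ^ 2 • (u2 * u1)
  hc : c = q ^ 2 • (p0 * p1)
  p1u3 : p1 * u3 = (q⁻¹ ^ 2) • (u3 * p1)
  p1u2 : p1 * u2 = u2 * p1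
  p0u0 : p0 * u0 = (q ^ 2) • (u0 * p0)
  p0u1 : p0 * u1 = u1 * p0
  p0u2 : p0 * u2 = (q⁻¹ ^ 2) • (u2 * p0)
  p0u3 : p0 * u3 = (q⁻¹ ^ 4) • (u3 * p0)
  p1p0 : p1 * p0 = (q ^ 4) • (p0 * p1)
  p1z : p1 * z = (q ^ 2) • (z * p1)
  p0z : p0 * z = (q⁻¹ ^ 2) • (z * p0)
  u3z : u3 * z = q ^ 2 • (z * u3) + (q ^ 2 - 1) • (u2 * p1)
  u2z : u2 * z = q ^ 2 • (z * u2) - (q ^ 4 - q ^ 2) • (p0 * u3)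
  bc : q ^ 2 • (z * (u2 * u1)) - q⁻¹ ^ 2 • (u2 * p1 * u0) - u3 * p0 * u1 = - c

theorem qid_of {q : K} {u0 u1 u2 u3 : R} (h : QRel q u0 u1 u2 u3) (hq : q ≠ 0)
    (p0 p1 z c : R) (hp1 : p1 = u3 * u1 - q ^ 2 • (u2 * u2))
    (hp0 : p0 = u2 * u0 - q ^ 2 • (u1 * u1))
    (hz : z = u3 * u0 - q ^ 2 • (u2 * u1)) (hc : c = q ^ 2 • (p0 * p1)) :
    QId q u0 u1 u2 u3 p0 p1 z c := by
  refine ⟨hp1, hp0, hz, hc, ?_, ?_, ?_, ?_, ?_, ?_, ?_, ?_, ?_, ?_, ?_, ?_⟩ <;>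
  · simp only [hc, hp1, hp0, hz, mul_sub, sub_mul, mul_assoc, smul_mul_assoc, mul_smul_comm,
      smul_sub, h.r01, h.r12, h.r23, h.r02, h.r13, h.r03, asc h.r01, asc h.r12, asc h.r23,
      asc2 h.r02, asc2 h.r13, asc2 h.r03]
    try (match_scalars <;> field_simp <;> try ring)

/-- Chebyshev-type polynomials, shifted by one. -/
def Sg (z c : R) : ℕ → R
  | 0 => 0
  | 1 => 1
  | (n + 2) => z * Sg z c (n + 1) - c * Sg z c n

theorem Sg_add_two (z c : R) (n : ℕ) :
    Sg z c (n + 2) = z * Sg z c (n + 1) - c * Sg z c n := rfl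

def Xs (q : K) (z c u3 v : R) (m : ℕ) : R := Sg z c (m + 1) * u3 - q⁻¹ ^ 2 • (Sg z c m * v)

theorem Sg_comm (z c x : R) (hz : Commute x z) (hc : Commute x c) (n : ℕ) :
    Commute x (Sg z c n) := by
  induction n using Nat.twoStepInduction with
  | zero => exact Commute.zero_right x
  | one => exact Commute.one_right x
  | more n h1 h2 => exact (hz.mul_right h2).sub_right (hc.mul_right h1)

theorem Xs_rec (q : K) (z c u3 v : R) (m : ℕ) :
    Xs q z c u3 v (m + 2) = z * Xs q z c u3 v (m + 1) - c * Xs q z c u3 v m := by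
  simp only [Xs, Sg_add_two, mul_sub, sub_mul, mul_assoc, mul_smul_comm, smul_sub]
  abel

variable {q : K} {u0 u1 u2 u3 p0 p1 z c : R}

theorem QId.cz (h : QId q u0 u1 u2 u3 p0 p1 z c) (hq : q ≠ 0) : Commute c z := by
  unfold Commute SemiconjBy
  simp only [h.hc, mul_smul_comm, smul_mul_assoc, mul_assoc, h.p1z]
  rw [← mul_assoc, h.p0z]
  simp only [mul_smul_comm, smul_mul_assoc, mul_assoc]
  match_scalars; field_simp

theorem QId.u3c (h : QId q u0 u1 u2 u3 p0 p1 z c) (hq : q ≠ 0) :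
    u3 * c = q ^ 6 • (c * u3) := by
  simp only [h.hc, mul_smul_comm, smul_mul_assoc, mul_assoc, h.p1u3]
  rw [← mul_assoc p0 u3, h.p0u3]
  simp only [mul_smul_comm, smul_mul_assoc, mul_assoc]
  match_scalars; field_simp

theorem QId.cu2 (h : QId q u0 u1 u2 u3 p0 p1 z c) (hq : q ≠ 0) :
    u2 * c = q ^ 2 • (c * u2) := by
  simp only [h.hc, mul_smul_comm, smul_mul_assoc, mul_assoc, h.p1u2]
  rw [← mul_assoc p0 u2, h.p0u2]
  simp only [mul_smul_comm, smul_mul_assoc, mul_assoc]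
  match_scalars; field_simp

theorem QId.vc (h : QId q u0 u1 u2 u3 p0 p1 z c) (hq : q ≠ 0) :
    (u2 * p1) * c = q ^ 6 • (c * (u2 * p1)) := by
  have h1 : p1 * c = q ^ 4 • (c * p1) := by
    simp only [h.hc, mul_smul_comm, smul_mul_assoc, ← mul_assoc, h.p1p0]
    match_scalars; field_simp
  rw [mul_assoc, h1, mul_smul_comm, ← mul_assoc, h.cu2 hq, smul_mul_assoc, smul_smul, mul_assoc]
  congr 1; ring

theorem QId.vz (h : QId q u0 u1 u2 u3 p0 p1 z c) (hq : q ≠ 0) :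
    (u2 * p1) * z = q ^ 4 • (z * (u2 * p1)) - (q ^ 6 - q ^ 4) • (c * u3) := by
  rw [mul_assoc, h.p1z, mul_smul_comm, ← mul_assoc, h.u2z]
  simp only [h.hc, mul_smul_comm, smul_mul_assoc, sub_mul, mul_assoc, h.p1u3]
  match_scalars <;> field_simp

theorem QId.Xz0 (h : QId q u0 u1 u2 u3 p0 p1 z c) (hq : q ≠ 0) :
    Xs q z c u3 (u2 * p1) 0 * z = q ^ 2 • Xs q z c u3 (u2 * p1) 1 + q ^ 2 • (u2 * p1) := by
  simp only [Xs, Sg, zero_add, one_mul, zero_mul, smul_zero, sub_zero, mul_zero, mul_one, h.u3z]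
  match_scalars <;> field_simp
  ring

theorem QId.Xz (h : QId q u0 u1 u2 u3 p0 p1 z c) (hq : q ≠ 0) (m : ℕ) :
    Xs q z c u3 (u2 * p1) (m + 1) * z = q ^ 2 • Xs q z c u3 (u2 * p1) (m + 2) +
      q ^ 4 • (c * Xs q z c u3 (u2 * p1) m) := by
  induction m using Nat.twoStepInduction with
  | zero =>
    simp only [Xs, Sg, zero_add, one_mul, zero_mul, smul_zero, sub_zero, mul_zero, mul_one, h.u3z,
      sub_mul, smul_mul_assoc, mul_assoc, mul_add, mul_smul_comm]
    rw [← mul_assoc u2 p1 z, h.vz hq]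
    match_scalars <;> field_simp <;> ring
  | one =>
    have h0 := h.Xz0 hq
    rw [Xs_rec q z c u3 (u2 * p1) 0, sub_mul, mul_assoc, mul_assoc, h0]
    have h1 : Xs q z c u3 (u2 * p1) (0 + 1) * z = q ^ 2 • Xs q z c u3 (u2 * p1) 2 +
      q ^ 4 • (c * Xs q z c u3 (u2 * p1) 0) := by
      simp only [Xs, Sg, zero_add, one_mul, zero_mul, smul_zero, sub_zero, mul_zero, mul_one, h.u3z,
        sub_mul, smul_mul_assoc, mul_assoc, mul_add, mul_smul_comm]
      rw [← mul_assoc u2 p1 z, h.vz hq]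
      match_scalars <;> field_simp <;> ring
    rw [h1, show 1 + 2 = 1 + 2 from rfl, Xs_rec q z c u3 (u2 * p1) 1]
    have h2 : z * (c * Xs q z c u3 (u2 * p1) 0) = c * (Xs q z c u3 (u2 * p1) 1
        + q⁻¹ ^ 2 • (u2 * p1)) := by
      rw [← mul_assoc, ← (h.cz hq).eq, mul_assoc]
      simp [Xs, Sg]
    simp only [mul_add, mul_smul_comm, h2, smul_add, smul_sub]
    norm_num
    match_scalars <;> field_simp <;> ring
  | more m h1 h2 =>
    rw [Xs_rec q z c u3 (u2 * p1) (m + 1), sub_mul, mul_assoc, mul_assoc, h1, h2,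
      Xs_rec q z c u3 (u2 * p1) (m + 2), Xs_rec q z c u3 (u2 * p1) (m + 1),
      Xs_rec q z c u3 (u2 * p1) m]
    have h3 : ∀ x, z * (c * x) = c * (z * x) := fun x => by
      rw [← mul_assoc, ← (h.cz hq).eq, mul_assoc]
    simp only [mul_add, mul_sub, mul_smul_comm, smul_add, smul_sub, h3]
    match_scalars <;> field_simp <;> ring

theorem QId.Xc (h : QId q u0 u1 u2 u3 p0 p1 z c) (hq : q ≠ 0) (m : ℕ) :
    Xs q z c u3 (u2 * p1) m * c = q ^ 6 • (c * Xs q z c u3 (u2 * p1) m) := by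
  have hS : ∀ n x, Sg z c n * (c * x) = c * (Sg z c n * x) := fun n x => by
    rw [← mul_assoc, ← (Sg_comm z c c (h.cz hq) (Commute.refl c) n).eq, mul_assoc]
  simp only [Xs, sub_mul, smul_mul_assoc, mul_assoc, h.u3c hq, mul_sub, mul_smul_comm]
  rw [← mul_assoc u2 p1 c, h.vc hq]
  simp only [mul_smul_comm, hS, mul_assoc]
  match_scalars <;> ring

theorem QId.P (h : QId q u0 u1 u2 u3 p0 p1 z c) (hq : q ≠ 0) (m : ℕ) :
    u3 * Sg z c (m + 1) - q ^ 2 • (u2 * p1 * Sg z c m) =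
      q ^ (2 * m) • Xs q z c u3 (u2 * p1) m := by
  have hS : ∀ n, Sg z c (n + 2) = Sg z c (n + 1) * z - Sg z c n * c := fun n => by
    rw [← (Sg_comm z c c (h.cz hq) (Commute.refl c) n).eq,
      ← (Sg_comm z c z (Commute.refl z) (h.cz hq).symm (n + 1)).eq, Sg_add_two]
  induction m using Nat.twoStepInduction with
  | zero => simp [Xs, Sg]
  | one =>
    simp only [Xs, Sg, zero_add, one_mul, zero_mul, smul_zero, sub_zero, mul_zero, mul_one, h.u3z]
    match_scalars <;> field_simp
    ring
  | more m h1 h2 =>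
    have e : u3 * Sg z c (m + 2 + 1) - q ^ 2 • (u2 * p1 * Sg z c (m + 2)) =
      (u3 * Sg z c (m + 1 + 1) - q ^ 2 • (u2 * p1 * Sg z c (m + 1))) * z -
      (u3 * Sg z c (m + 1) - q ^ 2 • (u2 * p1 * Sg z c m)) * c := by
      rw [hS (m + 1), hS m]
      simp only [mul_sub, sub_mul, smul_mul_assoc, mul_assoc, smul_sub]
      abel
    rw [e, h1, h2, smul_mul_assoc, smul_mul_assoc, h.Xz hq, h.Xc hq]
    match_scalars <;> ring

theorem QId.F1 (h : QId q u0 u1 u2 u3 p0 p1 z c) (hq : q ≠ 0) (m : ℕ) :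
    Sg z c (m + 3) = Xs q z c u3 (u2 * p1) (m + 1) * u0 - Xs q z c u3 (u2 * p1) m * p0 * u1 := by
  have hSz := (Sg_comm z c z (Commute.refl z) (h.cz hq).symm (m + 2)).eq
  have hSz1 := (Sg_comm z c z (Commute.refl z) (h.cz hq).symm (m + 1)).eq
  have hSc := (Sg_comm z c c (h.cz hq) (Commute.refl c) m).eq
  have hSc1 := (Sg_comm z c c (h.cz hq) (Commute.refl c) (m + 1)).eq
  have e1 : u3 * u0 = z + q ^ 2 • (u2 * u1) := by rw [h.hz]; abel
  have e2 : u2 * p1 * p0 * u1 = q ^ 4 • (c * (u2 * u1)) := by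
    have : p1 * p0 = q ^ 2 • c := by
      rw [h.p1p0, h.hc]; match_scalars; ring
    rw [mul_assoc u2, this, mul_smul_comm, h.cu2 hq]
    simp only [smul_mul_assoc, mul_assoc]
    match_scalars; ring
  have e3 : Sg z c (m + 1) * z = Sg z c (m + 2) + Sg z c m * c := by
    rw [Sg_add_two, ← hSz1, ← hSc]; abel
  have e4 : Sg z c (m + 1) * (q ^ 2 • (z * (u2 * u1)) - q⁻¹ ^ 2 • (u2 * p1 * u0)
      - u3 * p0 * u1) = - (Sg z c (m + 1) * c) := by rw [h.bc, mul_neg]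
  have e5 : Sg z c (m + 1) * (z * (u2 * u1)) = Sg z c (m + 2) * (u2 * u1)
      + Sg z c m * (c * (u2 * u1)) := by
    rw [← mul_assoc, e3, add_mul, mul_assoc]
  have L : Sg z c (m + 3) = Sg z c (m + 2) * z - Sg z c (m + 1) * c := by
    rw [← hSz, ← hSc1, Sg_add_two]
  have X1 : Xs q z c u3 (u2 * p1) (m + 1) * u0 = Sg z c (m + 2) * z
      + q ^ 2 • (Sg z c (m + 2) * (u2 * u1)) - q⁻¹ ^ 2 • (Sg z c (m + 1) * (u2 * p1 * u0)) := by
    rw [Xs, sub_mul, mul_assoc, e1, mul_add, mul_smul_comm, smul_mul_assoc, mul_assoc (Sg z c _)]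
  have X2 : Xs q z c u3 (u2 * p1) m * p0 * u1 = Sg z c (m + 1) * (u3 * p0 * u1)
      - q ^ 2 • (Sg z c m * (c * (u2 * u1))) := by
    have : Sg z c m * (u2 * p1 * p0 * u1) = q ^ 4 • (Sg z c m * (c * (u2 * u1))) := by
      rw [e2, mul_smul_comm]
    rw [Xs, sub_mul, sub_mul, smul_mul_assoc, smul_mul_assoc]
    simp only [mul_assoc] at this ⊢
    rw [this]
    match_scalars <;> field_simp
  rw [mul_sub, mul_sub, mul_smul_comm, mul_smul_comm, e5] at e4
  rw [L, X1, X2, sub_eq_add_neg, ← e4]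
  module

theorem QId.p0S (h : QId q u0 u1 u2 u3 p0 p1 z c) (hq : q ≠ 0) (m : ℕ) :
    p0 * Sg z c (m + 1) = q⁻¹ ^ (2 * m) • (Sg z c (m + 1) * p0) := by
  have hc : p0 * c = q⁻¹ ^ 4 • (c * p0) := by
    simp only [h.hc, mul_smul_comm, smul_mul_assoc, mul_assoc, h.p1p0]
    match_scalars; field_simp
  induction m using Nat.twoStepInduction with
  | zero => simp [Sg]
  | one => simp [Sg, h.p0z]
  | more m h1 h2 =>
    rw [Sg_add_two, mul_sub, ← mul_assoc, ← mul_assoc, h.p0z, hc, smul_mul_assoc, smul_mul_assoc,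
      mul_assoc, h2, mul_assoc, h1]
    simp only [mul_smul_comm, sub_mul, mul_assoc]
    match_scalars <;> ring

theorem QId.p0X (h : QId q u0 u1 u2 u3 p0 p1 z c) (hq : q ≠ 0) (m : ℕ) :
    p0 * Xs q z c u3 (u2 * p1) m = q⁻¹ ^ (2 * m + 4) • (Xs q z c u3 (u2 * p1) m * p0) := by
  have hv : p0 * (u2 * p1) = q⁻¹ ^ 6 • (u2 * p1 * p0) := by
    rw [← mul_assoc, h.p0u2, mul_assoc u2 p1, h.p1p0]
    simp only [mul_smul_comm, smul_mul_assoc, mul_assoc]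
    match_scalars; field_simp
  cases m with
  | zero => simp [Xs, Sg, h.p0u3]
  | succ m =>
    rw [Xs, mul_sub, mul_smul_comm, ← mul_assoc, ← mul_assoc, h.p0S hq, h.p0S hq,
      smul_mul_assoc, smul_mul_assoc, mul_assoc _ p0, mul_assoc _ p0, hv, h.p0u3]
    simp only [mul_smul_comm, sub_mul, smul_mul_assoc, mul_assoc]
    match_scalars <;> ring

end generic

section uniq

def muI (b : Idx) : ℕ := 2 * b.1 + b.2.1 + b.2.2.1 + 2 * b.2.2.2

theorem muI_lt {a b : Idx} (h : b ∈ Sset a) : muI b < muI a := by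
  obtain ⟨⟨s, r, h1, h2, h3, h4⟩, hne⟩ := h
  obtain ⟨a3, a2, a1, a0⟩ := a
  obtain ⟨b3, b2, b1, b0⟩ := b
  simp only [muI, ne_eq, Prod.mk.injEq] at *
  by_contra hlt
  exact hne ⟨by omega, by omega, by omega, by omega⟩

theorem Sset_trans {a b d : Idx} (h : b ∈ Sset a) (h' : d ∈ Sset b) : d ∈ Sset a := by
  have e1 := muI_lt h
  have e2 := muI_lt h'
  refine ⟨?_, fun e => by rw [e] at e1; omega⟩
  obtain ⟨⟨s, r, h1, h2, h3, h4⟩, -⟩ := h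
  obtain ⟨⟨s', r', h1', h2', h3', h4'⟩, -⟩ := h'
  refine ⟨s + s', r + r', ?_, ?_, ?_, ?_⟩ <;> push_cast <;> omega

theorem not_mem_Sset (a : Idx) : a ∉ Sset a := fun h => h.2 rfl

variable {K R : Type*} [Field K] [Ring R] [Algebra K R]

/-- the lattice `∑ q ℤ[q] E[b]`, `b ∈ S(a)` -/
def Lq (Zq : Subring K) (q : K) (E : Idx → R) (a : Idx) : Submodule Zq R :=
  Submodule.span Zq ((fun b => q • E b) '' Sset a)

/-- the `K`-span of the `E[b]`, `b ∈ S(a)` -/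
def Tl (K : Type*) {R : Type*} [Field K] [Ring R] [Algebra K R] (E : Idx → R) (a : Idx) : Submodule K R := Submodule.span K (E '' Sset a)

theorem Lq_le_Tl {Zq : Subring K} {q : K} {E : Idx → R} {a : Idx} {x : R}
    (h : x ∈ Lq Zq q E a) : x ∈ Tl K E a := by
  unfold Lq at h
  induction h using Submodule.span_induction with
  | mem x hx =>
    obtain ⟨b, hb, rfl⟩ := hx
    exact Submodule.smul_mem _ _ (Submodule.subset_span ⟨b, hb, rfl⟩)
  | zero => exact Submodule.zero_mem _
  | add x y _ _ hx hy => exact Submodule.add_mem _ hx hy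
  | smul c x _ hx => exact Submodule.smul_mem _ (c : K) hx

theorem Tl_mono {E : Idx → R} {a b : Idx} (h : b ∈ Sset a) : Tl K E b ≤ Tl K E a :=
  Submodule.span_mono (Set.image_mono fun _ hd => Sset_trans h hd)

/-- data for the uniqueness argument -/
structure Dat (Zq : Subring K) (q : K) (bar : K →+* K) (σ : R → R) (E B : Idx → R)
    (ν : Idx → K) : Prop where
  hE : LinearIndependent K E
  hadd : ∀ x y, σ (x + y) = σ x + σ y
  hsmul : ∀ (k : K) x, σ (k • x) = bar k • σ x
  hL : ∀ a, B a - E a ∈ Lq Zq q E a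
  hσ : ∀ a, σ (B a) = ν a • B a
  hν : ∀ a b, b ∈ Sset a → ν b = ν a
  hν0 : ∀ a, ν a ≠ 0
  hbar : ∀ x ∈ Zq, bar (q * x) = q * x → q * x = 0

variable {Zq : Subring K} {q : K} {bar : K →+* K} {σ : R → R} {E B : Idx → R} {ν : Idx → K}

theorem Dat.map_zero (h : Dat Zq q bar σ E B ν) : σ 0 = 0 := by
  have := h.hadd 0 0
  simpa using this

theorem Dat.map_sub (h : Dat Zq q bar σ E B ν) (x y : R) : σ (x - y) = σ x - σ y := by
  have := h.hadd (x - y) y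
  rw [sub_add_cancel] at this
  rw [this, add_sub_cancel_right]

theorem Dat.sigmaE (h : Dat Zq q bar σ E B ν) :
    ∀ (n : ℕ) (a : Idx), muI a = n → σ (E a) - ν a • E a ∈ Tl K E a := by
  intro n
  induction n using Nat.strong_induction_on with
  | _ n ih =>
    intro a ha
    have key : ∀ y ∈ Tl K E a, σ y ∈ Tl K E a := by
      intro y hy
      unfold Tl at hy
      induction hy using Submodule.span_induction with
      | mem x hx =>
        obtain ⟨b, hb, rfl⟩ := hx
        have h1 := Tl_mono hb (ih (muI b) (ha ▸ muI_lt hb) b rfl)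
        have h2 : ν b • E b ∈ Tl K E a :=
          Submodule.smul_mem _ _ (Submodule.subset_span ⟨b, hb, rfl⟩)
        simpa using Submodule.add_mem _ h1 h2
      | zero => rw [h.map_zero]; exact Submodule.zero_mem _
      | add x y _ _ hx hy => rw [h.hadd]; exact Submodule.add_mem _ hx hy
      | smul c x _ hx => rw [h.hsmul]; exact Submodule.smul_mem _ _ hx
    have hy := Lq_le_Tl (h.hL a)
    have h1 := key _ hy
    rw [h.map_sub, h.hσ] at h1
    have h2 := Submodule.sub_mem _ (Submodule.smul_mem _ (ν a) hy) h1
    convert h2 using 1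
    rw [smul_sub]; abel

theorem Dat.sigmaT (h : Dat Zq q bar σ E B ν) (a : Idx) : ∀ y ∈ Tl K E a, σ y ∈ Tl K E a := by
  intro y hy
  unfold Tl at hy
  induction hy using Submodule.span_induction with
  | mem x hx =>
    obtain ⟨b, hb, rfl⟩ := hx
    have h1 := Tl_mono hb (h.sigmaE _ b rfl)
    have h2 : ν b • E b ∈ Tl K E a :=
      Submodule.smul_mem _ _ (Submodule.subset_span ⟨b, hb, rfl⟩)
    simpa using Submodule.add_mem _ h1 h2
  | zero => rw [h.map_zero]; exact Submodule.zero_mem _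
  | add x y _ _ hx hy => rw [h.hadd]; exact Submodule.add_mem _ hx hy
  | smul c x _ hx => rw [h.hsmul]; exact Submodule.smul_mem _ _ hx

theorem Dat.coef (h : Dat Zq q bar σ E B ν) {b : Idx} {s : Set Idx} (hb : b ∉ s) {k : K}
    (hk : k • E b ∈ Submodule.span K (E '' s)) : k = 0 := by
  by_contra h0
  have := Submodule.smul_mem _ k⁻¹ hk
  rw [smul_smul, inv_mul_cancel₀ h0, one_smul] at this
  exact h.hE.notMem_span_image hb this

theorem Dat.fixed_zero (h : Dat Zq q bar σ E B ν) {a : Idx} {y : R} (hy : y ∈ Lq Zq q E a)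
    (hs : σ y = ν a • y) : y = 0 := by
  classical
  obtain ⟨l, hl, hly⟩ := (Finsupp.mem_span_image_iff_linearCombination Zq).1 hy
  by_contra hy0
  let T : Finset Idx := l.support.filter fun b => q * (l b : K) ≠ 0
  have hsum : y = ∑ b ∈ T, (q * (l b : K)) • E b := by
    rw [← hly, Finsupp.linearCombination_apply, Finsupp.sum, Finset.sum_filter]
    refine Finset.sum_congr rfl fun b _ => ?_
    have e : l b • q • E b = (q * (l b : K)) • E b := by
      rw [Subring.smul_def, smul_smul, mul_comm]
    rw [e]
    split_ifs with h0
    · rfl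
    · rw [not_not.1 h0, zero_smul]
  have hT : T.Nonempty := by
    rw [Finset.nonempty_iff_ne_empty]
    intro h0
    rw [h0] at hsum
    exact hy0 (by simpa using hsum)
  obtain ⟨b, hbT, hmax⟩ := Finset.exists_max_image T muI hT
  have hTS : ∀ d ∈ T, d ∈ Sset a := fun d hd => hl (Finset.mem_filter.1 hd).1
  have hb0 : q * (l b : K) ≠ 0 := (Finset.mem_filter.1 hbT).2
  let W : Submodule K R := Submodule.span K (E '' {b}ᶜ)
  have hEW : ∀ d, d ≠ b → E d ∈ W := fun d hd => Submodule.subset_span ⟨d, hd, rfl⟩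
  have hTW : ∀ d, b ∉ Sset d → Tl K E d ≤ W := fun d hd =>
    Submodule.span_mono (Set.image_mono fun x hx hxb => hd (by
      rw [Set.mem_singleton_iff] at hxb; exact hxb ▸ hx))
  have hbd : ∀ d ∈ T, b ∉ Sset d := fun d hd hbd => by
    have := hmax d hd
    have := muI_lt hbd
    omega
  have hsumσ : ∀ s : Finset Idx, σ (∑ d ∈ s, (q * (l d : K)) • E d)
      = ∑ d ∈ s, bar (q * (l d : K)) • σ (E d) := by
    intro s
    induction s using Finset.induction_on with
    | empty => simpa using h.map_zero
    | insert x s hx ih => rw [Finset.sum_insert hx, Finset.sum_insert hx, h.hadd, ih, h.hsmul]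
  have h1 : σ y - (bar (q * (l b : K)) * ν a) • E b ∈ W := by
    rw [hsum, hsumσ, ← Finset.add_sum_erase _ _ hbT]
    have e1 : bar (q * (l b : K)) • σ (E b) - (bar (q * (l b : K)) * ν a) • E b ∈ W := by
      rw [mul_smul, ← smul_sub]
      refine Submodule.smul_mem _ _ (hTW b (not_mem_Sset b) ?_)
      rw [← h.hν a b (hTS b hbT)]
      exact h.sigmaE _ b rfl
    have e2 : ∑ d ∈ T.erase b, bar (q * (l d : K)) • σ (E d) ∈ W := by
      refine Submodule.sum_mem _ fun d hd => Submodule.smul_mem _ _ ?_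
      have hd' := Finset.mem_erase.1 hd
      have := Submodule.add_mem _ (hTW d (hbd d hd'.2) (h.sigmaE _ d rfl))
        (Submodule.smul_mem _ (ν d) (hEW d hd'.1))
      simpa using this
    have := Submodule.add_mem _ e1 e2
    convert this using 1
    abel
  have h2 : ν a • y - (ν a * (q * (l b : K))) • E b ∈ W := by
    rw [hsum, ← Finset.add_sum_erase _ _ hbT, smul_add, smul_smul, add_sub_cancel_left]
    refine Submodule.smul_mem _ _ (Submodule.sum_mem _ fun d hd => Submodule.smul_mem _ _ ?_)
    exact hEW d (Finset.mem_erase.1 hd).1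
  have h3 := Submodule.sub_mem _ h2 h1
  rw [hs, sub_sub_sub_cancel_left, ← sub_smul] at h3
  have h4 := h.coef (b := b) (by simp) h3
  have h5 : bar (q * (l b : K)) = q * (l b : K) := by
    have : ν a * (bar (q * (l b : K)) - q * (l b : K)) = 0 := by linear_combination h4
    rcases mul_eq_zero.1 this with h6 | h6
    · exact absurd h6 (h.hν0 a)
    · exact sub_eq_zero.1 h6
  exact hb0 (h.hbar _ (l b).2 h5)

theorem Dat.unique (h : Dat Zq q bar σ E B ν) {a : Idx} {X : R} (hX : X - E a ∈ Lq Zq q E a)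
    {k : K} (hs : σ X = k • X) : B a = X := by
  have hXT := Lq_le_Tl hX
  have h1 := h.sigmaT a _ hXT
  rw [h.map_sub, hs] at h1
  have h2 := Submodule.sub_mem _ (Submodule.add_mem _ h1 (h.sigmaE _ a rfl))
    (Submodule.smul_mem _ k hXT)
  have h3 : (k - ν a) • E a ∈ Tl K E a := by
    convert h2 using 1
    rw [sub_smul, smul_sub]; abel
  have h4 := h.coef (not_mem_Sset a) h3
  have hk : k = ν a := by linear_combination h4
  subst hk
  have h5 : X - B a ∈ Lq Zq q E a := by
    have := Submodule.sub_mem _ hX (h.hL a)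
    simpa using this
  have h6 := h.fixed_zero h5 (by rw [h.map_sub, hs, h.hσ, smul_sub])
  exact (sub_eq_zero.1 h6).symm

end uniq

section lattice
variable {K R : Type*} [Field K] [Ring R] [Algebra K R]

theorem powl {k : K} {x y : R} (h : x * y = k • (y * x)) (n : ℕ) :
    x ^ n * y = k ^ n • (y * x ^ n) := by
  induction n with
  | zero => simp
  | succ n ih =>
    rw [pow_succ, mul_assoc, h, mul_smul_comm, ← mul_assoc, ih, smul_mul_assoc, smul_smul,
      mul_assoc, pow_succ k, mul_comm]

theorem powr {k : K} {x y : R} (h : x * y = k • (y * x)) (n : ℕ) :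
    x * y ^ n = k ^ n • (y ^ n * x) := by
  induction n with
  | zero => simp
  | succ n ih =>
    rw [pow_succ, ← mul_assoc, ih, smul_mul_assoc, mul_assoc, h, mul_smul_comm, smul_smul,
      mul_assoc, pow_succ k]

/-- generic dual PBW element -/
def gE (q : K) (u0 u1 u2 u3 : R) (a : Idx) : R :=
  q ^ bexp a • (u3 ^ a.1 * u2 ^ a.2.1 * u1 ^ a.2.2.1 * u0 ^ a.2.2.2)

theorem choose_s (n : ℕ) : Nat.choose (n + 1) 2 = Nat.choose n 2 + n := by
  rw [Nat.choose_succ_succ' n 1, Nat.choose_one_right, add_comm]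

variable {q : K} {u0 u1 u2 u3 p0 p1 z c : R}

theorem E_u0 (a3 a2 a1 a0 : ℕ) :
    q ^ a0 • (gE q u0 u1 u2 u3 (a3, a2, a1, a0) * u0) = gE q u0 u1 u2 u3 (a3, a2, a1, a0 + 1) := by
  simp only [gE, bexp, choose_s, pow_succ, smul_mul_assoc, mul_assoc]
  match_scalars; ring

theorem u3_E (a3 a2 a1 a0 : ℕ) :
    q ^ a3 • (u3 * gE q u0 u1 u2 u3 (a3, a2, a1, a0)) = gE q u0 u1 u2 u3 (a3 + 1, a2, a1, a0) := by
  simp only [gE, bexp, choose_s, pow_succ' u3, mul_smul_comm, mul_assoc]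
  match_scalars; ring

theorem E_u1 (h : QRel q u0 u1 u2 u3) (hq : q ≠ 0) (a3 a2 a1 a0 : ℕ) :
    q ^ (2 * a0 + a1) • (gE q u0 u1 u2 u3 (a3, a2, a1, a0) * u1)
      = gE q u0 u1 u2 u3 (a3, a2, a1 + 1, a0) := by
  simp only [gE, bexp, choose_s, pow_succ u1, smul_mul_assoc, mul_smul_comm, mul_assoc, powl h.r01]
  match_scalars; simp only [← pow_mul, inv_pow]; field_simp; ring

theorem u2_E (h : QRel q u0 u1 u2 u3) (hq : q ≠ 0) (a3 a2 a1 a0 : ℕ) :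
    q ^ (2 * a3 + a2) • (u2 * gE q u0 u1 u2 u3 (a3, a2, a1, a0))
      = gE q u0 u1 u2 u3 (a3, a2 + 1, a1, a0) := by
  simp only [gE, bexp, choose_s, pow_succ' u2, smul_mul_assoc, mul_smul_comm, mul_assoc,
    asc (powr h.r23 _)]
  match_scalars; simp only [← pow_mul, inv_pow]; field_simp; ring

theorem p1_E (h : QRel q u0 u1 u2 u3) (hi : QId q u0 u1 u2 u3 p0 p1 z c) (hq : q ≠ 0)
    (a3 a2 a1 a0 : ℕ) :
    q ^ (3 * a3 + 2 * a2 + a1) • (p1 * gE q u0 u1 u2 u3 (a3, a2, a1, a0))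
      = gE q u0 u1 u2 u3 (a3 + 1, a2, a1 + 1, a0)
        - q ^ (1 + a3 + a1) • gE q u0 u1 u2 u3 (a3, a2 + 2, a1, a0) := by
  have e : p1 * gE q u0 u1 u2 u3 (a3, a2, a1, a0) =
    (q ^ bexp (a3, a2, a1, a0) * (q⁻¹ ^ 2) ^ a3) •
      (u3 ^ a3 * (p1 * (u2 ^ a2 * (u1 ^ a1 * u0 ^ a0)))) := by
    simp only [gE, mul_smul_comm, mul_assoc, asc (powr hi.p1u3 _), smul_smul]
  have e2 : u1 * (u2 ^ a2 * (u1 ^ a1 * u0 ^ a0)) =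
      (q⁻¹ ^ 2) ^ a2 • (u2 ^ a2 * (u1 ^ (a1 + 1) * u0 ^ a0)) := by
    rw [asc (powr h.r12 _), pow_succ' u1]; simp only [mul_assoc]
  rw [e, hi.hp1]
  simp only [sub_mul, mul_sub, smul_mul_assoc, mul_assoc, e2, mul_smul_comm]
  simp only [gE, bexp, choose_s, pow_succ u3, pow_succ' u2, mul_assoc]
  match_scalars <;> simp only [← pow_mul, inv_pow] <;> field_simp <;> ring

theorem E_p0 (h : QRel q u0 u1 u2 u3) (hi : QId q u0 u1 u2 u3 p0 p1 z c) (hq : q ≠ 0)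
    (a3 a2 a1 a0 : ℕ) :
    q ^ (3 * a0 + 2 * a1 + a2) • (gE q u0 u1 u2 u3 (a3, a2, a1, a0) * p0)
      = gE q u0 u1 u2 u3 (a3, a2 + 1, a1, a0 + 1)
        - q ^ (1 + a0 + a2) • gE q u0 u1 u2 u3 (a3, a2, a1 + 2, a0) := by
  have h0 : u0 * p0 = q⁻¹ ^ 2 • (p0 * u0) := by
    rw [hi.p0u0, smul_smul]; field_simp; simp
  have e : gE q u0 u1 u2 u3 (a3, a2, a1, a0) * p0 =
    (q ^ bexp (a3, a2, a1, a0) * (q⁻¹ ^ 2) ^ a0) •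
      (u3 ^ a3 * (u2 ^ a2 * (u1 ^ a1 * (p0 * u0 ^ a0)))) := by
    simp only [gE, mul_smul_comm, smul_mul_assoc, mul_assoc, powl h0, smul_smul]
  have e2 : u2 ^ a2 * (u1 ^ a1 * (u2 * (u0 * u0 ^ a0))) =
      (q⁻¹ ^ 2) ^ a1 • (u2 ^ (a2 + 1) * (u1 ^ a1 * u0 ^ (a0 + 1))) := by
    rw [asc (powl h.r12 _), pow_succ u2, pow_succ' u0]; simp only [mul_assoc, mul_smul_comm]
  rw [e, hi.hp0]
  simp only [sub_mul, mul_sub, smul_mul_assoc, mul_assoc, e2, mul_smul_comm]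
  simp only [gE, bexp, choose_s, pow_succ u1, mul_assoc]
  match_scalars <;> simp only [← pow_mul, inv_pow] <;> field_simp <;> ring

theorem mem_Sset {a3 a2 a1 a0 b3 b2 b1 b0 : ℕ} (s r : ℕ) (hsr : 0 < s + r)
    (h3 : (b3 : ℤ) = a3 - s) (h2 : (b2 : ℤ) = a2 + 2 * s - r) (h1 : (b1 : ℤ) = a1 - s + 2 * r)
    (h0 : (b0 : ℤ) = a0 - r) : ((b3, b2, b1, b0) : Idx) ∈ Sset (a3, a2, a1, a0) := by
  refine ⟨⟨s, r, h3, h2, h1, h0⟩, fun e => ?_⟩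
  simp only [Prod.mk.injEq] at e
  omega

theorem of_mem_Sset {a3 a2 a1 a0 b3 b2 b1 b0 : ℕ}
    (h : ((b3, b2, b1, b0) : Idx) ∈ Sset (a3, a2, a1, a0)) : ∃ s r : ℕ, 0 < s + r ∧
    (b3 : ℤ) = a3 - s ∧ (b2 : ℤ) = a2 + 2 * s - r ∧ (b1 : ℤ) = a1 - s + 2 * r ∧
    (b0 : ℤ) = a0 - r := by
  obtain ⟨⟨s, r, h3, h2, h1, h0⟩, hne⟩ := h
  refine ⟨s, r, ?_, h3, h2, h1, h0⟩
  by_contra hc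
  apply hne
  simp only [Prod.mk.injEq] at *
  omega

variable {Zq : Subring K} {E : Idx → R}

theorem pow_mem_Lq (hqZ : q ∈ Zq) {a b : Idx} (hb : b ∈ Sset a) {k : ℕ} (hk : 0 < k) :
    q ^ k • E b ∈ Lq Zq q E a := by
  obtain ⟨k, rfl⟩ := Nat.exists_eq_succ_of_ne_zero hk.ne'
  have := Submodule.smul_mem (Lq Zq q E a) (⟨q ^ k, Zq.pow_mem hqZ k⟩ : Zq)
    (Submodule.subset_span ⟨b, hb, rfl⟩)
  rw [Subring.smul_def] at this
  simpa [smul_smul, pow_succ] using this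

theorem Lq_map (f : R →ₗ[K] R) {a a' : Idx} (hf : ∀ b ∈ Sset a, f (q • E b) ∈ Lq Zq q E a')
    {x : R} (hx : x ∈ Lq Zq q E a) : f x ∈ Lq Zq q E a' := by
  unfold Lq at hx
  induction hx using Submodule.span_induction with
  | mem x hx =>
    obtain ⟨b, hb, rfl⟩ := hx
    exact hf b hb
  | zero => rw [map_zero]; exact Submodule.zero_mem _
  | add x y _ _ hx hy => rw [map_add]; exact Submodule.add_mem _ hx hy
  | smul c x _ hx =>
    rw [Subring.smul_def, map_smul]; exact Submodule.smul_mem _ c hx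

theorem lat_map (f : R →ₗ[K] R) {a a' : Idx} {X : R} (hX : X - E a ∈ Lq Zq q E a)
    (h0 : f (E a) - E a' ∈ Lq Zq q E a')
    (hf : ∀ b ∈ Sset a, f (q • E b) ∈ Lq Zq q E a') : f X - E a' ∈ Lq Zq q E a' := by
  have := Submodule.add_mem _ (Lq_map f hf hX) h0
  rw [map_sub] at this
  simpa using this

theorem lat_map0 (f : R →ₗ[K] R) {a a' : Idx} {X : R} (hX : X - E a ∈ Lq Zq q E a)
    (h0 : f (E a) ∈ Lq Zq q E a')
    (hf : ∀ b ∈ Sset a, f (q • E b) ∈ Lq Zq q E a') : f X ∈ Lq Zq q E a' := by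
  have := Submodule.add_mem _ (Lq_map f hf hX) h0
  rw [map_sub] at this
  simpa using this

theorem lat_u3 (hqZ : q ∈ Zq) (m : ℕ) {X : R}
    (hX : X - gE q u0 u1 u2 u3 (m, 0, 0, m) ∈ Lq Zq q (gE q u0 u1 u2 u3) (m, 0, 0, m)) :
    q ^ m • (u3 * X) - gE q u0 u1 u2 u3 (m + 1, 0, 0, m)
      ∈ Lq Zq q (gE q u0 u1 u2 u3) (m + 1, 0, 0, m) := by
  refine lat_map (q ^ m • LinearMap.mulLeft K u3) hX ?_ ?_
  · simp only [LinearMap.smul_apply, LinearMap.mulLeft_apply, u3_E, sub_self]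
    exact Submodule.zero_mem _
  · rintro ⟨b3, b2, b1, b0⟩ hb
    obtain ⟨s, r, hsr, h3, h2, h1, h0⟩ := of_mem_Sset hb
    obtain ⟨j, hj⟩ : ∃ j, m = j + b3 := ⟨m - b3, by omega⟩
    have e : (q ^ m • LinearMap.mulLeft K u3) (q • gE q u0 u1 u2 u3 (b3, b2, b1, b0))
        = q ^ (j + 1) • gE q u0 u1 u2 u3 (b3 + 1, b2, b1, b0) := by
      rw [← u3_E, LinearMap.smul_apply, LinearMap.mulLeft_apply, mul_smul_comm, smul_smul,
        smul_smul]
      congr 1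
      conv_lhs => rw [hj]
      ring
    rw [e]
    exact pow_mem_Lq hqZ (mem_Sset s r hsr (by push_cast; omega) h2 h1 h0) (by omega)

theorem lat_u0 (hqZ : q ∈ Zq) (m : ℕ) {X : R}
    (hX : X - gE q u0 u1 u2 u3 (m + 1, 0, 0, m) ∈ Lq Zq q (gE q u0 u1 u2 u3) (m + 1, 0, 0, m)) :
    q ^ m • (X * u0) - gE q u0 u1 u2 u3 (m + 1, 0, 0, m + 1)
      ∈ Lq Zq q (gE q u0 u1 u2 u3) (m + 1, 0, 0, m + 1) := by
  refine lat_map (q ^ m • LinearMap.mulRight K u0) hX ?_ ?_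
  · simp only [LinearMap.smul_apply, LinearMap.mulRight_apply, E_u0, sub_self]
    exact Submodule.zero_mem _
  · rintro ⟨b3, b2, b1, b0⟩ hb
    obtain ⟨s, r, hsr, h3, h2, h1, h0⟩ := of_mem_Sset hb
    obtain ⟨j, hj⟩ : ∃ j, m = j + b0 := ⟨m - b0, by omega⟩
    have e : (q ^ m • LinearMap.mulRight K u0) (q • gE q u0 u1 u2 u3 (b3, b2, b1, b0))
        = q ^ (j + 1) • gE q u0 u1 u2 u3 (b3, b2, b1, b0 + 1) := by
      rw [← E_u0, LinearMap.smul_apply, LinearMap.mulRight_apply, smul_mul_assoc, smul_smul,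
        smul_smul]
      congr 1
      conv_lhs => rw [hj]
      ring
    rw [e]
    exact pow_mem_Lq hqZ (mem_Sset s r hsr h3 h2 h1 (by push_cast; omega)) (by omega)

theorem lat_p1 (h : QRel q u0 u1 u2 u3) (hi : QId q u0 u1 u2 u3 p0 p1 z c) (hq : q ≠ 0)
    (hqZ : q ∈ Zq) (k : ℕ) {X : R}
    (hX : X - gE q u0 u1 u2 u3 (k, 0, 0, k) ∈ Lq Zq q (gE q u0 u1 u2 u3) (k, 0, 0, k)) :
    q ^ (3 * k) • (p1 * X) - gE q u0 u1 u2 u3 (k + 1, 0, 1, k)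
      ∈ Lq Zq q (gE q u0 u1 u2 u3) (k + 1, 0, 1, k) := by
  refine lat_map (q ^ (3 * k) • LinearMap.mulLeft K p1) hX ?_ ?_
  · have e := p1_E h hi hq k 0 0 k
    simp only [mul_zero, add_zero, zero_add] at e
    rw [LinearMap.smul_apply, LinearMap.mulLeft_apply, e, sub_sub_cancel_left]
    exact Submodule.neg_mem _ (pow_mem_Lq hqZ
      (mem_Sset 1 0 (by omega) (by push_cast; omega) (by simp) (by simp) (by simp)) (by omega))
  · rintro ⟨b3, b2, b1, b0⟩ hb
    obtain ⟨s, r, hsr, h3, h2, h1, h0⟩ := of_mem_Sset hb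
    have hk : 3 * k = 3 * b3 + 2 * b2 + b1 := by push_cast at *; omega
    rw [map_smul, LinearMap.smul_apply, LinearMap.mulLeft_apply, hk, p1_E h hi hq, smul_sub,
      smul_smul, ← pow_succ']
    refine Submodule.sub_mem _ (Submodule.subset_span
      ⟨_, mem_Sset s r hsr ?_ ?_ ?_ ?_, rfl⟩) (pow_mem_Lq hqZ
      (mem_Sset (s + 1) r ?_ ?_ ?_ ?_ ?_) ?_) <;> push_cast <;> push_cast at * <;> omega

theorem lat_p0 (h : QRel q u0 u1 u2 u3) (hi : QId q u0 u1 u2 u3 p0 p1 z c) (hq : q ≠ 0)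
    (hqZ : q ∈ Zq) (k : ℕ) {X : R}
    (hX : X - gE q u0 u1 u2 u3 (k + 1, 0, 0, k) ∈ Lq Zq q (gE q u0 u1 u2 u3) (k + 1, 0, 0, k)) :
    q ^ (3 * k) • (X * p0) - gE q u0 u1 u2 u3 (k + 1, 1, 0, k + 1)
      ∈ Lq Zq q (gE q u0 u1 u2 u3) (k + 1, 1, 0, k + 1) := by
  refine lat_map (q ^ (3 * k) • LinearMap.mulRight K p0) hX ?_ ?_
  · have e := E_p0 h hi hq (k + 1) 0 0 k
    simp only [mul_zero, add_zero, zero_add] at e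
    rw [LinearMap.smul_apply, LinearMap.mulRight_apply, e, sub_sub_cancel_left]
    exact Submodule.neg_mem _ (pow_mem_Lq hqZ
      (mem_Sset 0 1 (by omega) (by simp) (by simp) (by simp) (by simp)) (by omega))
  · rintro ⟨b3, b2, b1, b0⟩ hb
    obtain ⟨s, r, hsr, h3, h2, h1, h0⟩ := of_mem_Sset hb
    have hk : 3 * k = 3 * b0 + 2 * b1 + b2 := by push_cast at *; omega
    rw [map_smul, LinearMap.smul_apply, LinearMap.mulRight_apply, hk, E_p0 h hi hq, smul_sub,
      smul_smul, ← pow_succ']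
    refine Submodule.sub_mem _ (Submodule.subset_span
      ⟨_, mem_Sset s r hsr ?_ ?_ ?_ ?_, rfl⟩) (pow_mem_Lq hqZ
      (mem_Sset s (r + 1) ?_ ?_ ?_ ?_ ?_) ?_) <;> push_cast <;> push_cast at * <;> omega

theorem lat_u2 (h : QRel q u0 u1 u2 u3) (hq : q ≠ 0) (hqZ : q ∈ Zq) (k : ℕ) {X : R}
    (hX : X - gE q u0 u1 u2 u3 (k + 1, 0, 1, k) ∈ Lq Zq q (gE q u0 u1 u2 u3) (k + 1, 0, 1, k)) :
    q ^ (2 * k + 3) • (u2 * X) ∈ Lq Zq q (gE q u0 u1 u2 u3) (k + 2, 0, 0, k + 1) := by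
  have key : ∀ b3 b2 b1 b0 j : ℕ, 2 * k + 3 = j + (2 * b3 + b2) →
      (q ^ (2 * k + 3) • LinearMap.mulLeft K u2) (gE q u0 u1 u2 u3 (b3, b2, b1, b0))
        = q ^ j • gE q u0 u1 u2 u3 (b3, b2 + 1, b1, b0) := by
    intro b3 b2 b1 b0 j hj
    rw [← u2_E h hq, LinearMap.smul_apply, LinearMap.mulLeft_apply, smul_smul, hj, pow_add]
  refine lat_map0 (q ^ (2 * k + 3) • LinearMap.mulLeft K u2) hX ?_ ?_
  · rw [key _ _ _ _ 1 (by omega)]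
    refine pow_mem_Lq hqZ (mem_Sset 1 1 ?_ ?_ ?_ ?_ ?_) ?_ <;> push_cast <;> omega
  · rintro ⟨b3, b2, b1, b0⟩ hb
    obtain ⟨s, r, hsr, h3, h2, h1, h0⟩ := of_mem_Sset hb
    rw [map_smul, key _ _ _ _ (1 + r) (by push_cast at *; omega), smul_smul, ← pow_succ']
    refine pow_mem_Lq hqZ (mem_Sset (s + 1) (r + 1) ?_ ?_ ?_ ?_ ?_) ?_ <;> push_cast <;>
      push_cast at * <;> omega

theorem lat_u1 (h : QRel q u0 u1 u2 u3) (hq : q ≠ 0) (hqZ : q ∈ Zq) (k : ℕ) {X : R}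
    (hX : X - gE q u0 u1 u2 u3 (k, 1, 0, k) ∈ Lq Zq q (gE q u0 u1 u2 u3) (k, 1, 0, k)) :
    q ^ (2 * k + 2) • (X * u1) ∈ Lq Zq q (gE q u0 u1 u2 u3) (k + 1, 0, 0, k + 1) := by
  have key : ∀ b3 b2 b1 b0 j : ℕ, 2 * k + 2 = j + (2 * b0 + b1) →
      (q ^ (2 * k + 2) • LinearMap.mulRight K u1) (gE q u0 u1 u2 u3 (b3, b2, b1, b0))
        = q ^ j • gE q u0 u1 u2 u3 (b3, b2, b1 + 1, b0) := by
    intro b3 b2 b1 b0 j hj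
    rw [← E_u1 h hq, LinearMap.smul_apply, LinearMap.mulRight_apply, smul_smul, hj, pow_add]
  refine lat_map0 (q ^ (2 * k + 2) • LinearMap.mulRight K u1) hX ?_ ?_
  · rw [key _ _ _ _ 2 (by omega)]
    refine pow_mem_Lq hqZ (mem_Sset 1 1 ?_ ?_ ?_ ?_ ?_) ?_ <;> push_cast <;> omega
  · rintro ⟨b3, b2, b1, b0⟩ hb
    obtain ⟨s, r, hsr, h3, h2, h1, h0⟩ := of_mem_Sset hb
    rw [map_smul, key _ _ _ _ (2 + s) (by push_cast at *; omega), smul_smul, ← pow_succ']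
    refine pow_mem_Lq hqZ (mem_Sset (s + 1) (r + 1) ?_ ?_ ?_ ?_ ?_) ?_ <;> push_cast <;>
      push_cast at * <;> omega

end lattice

section main
variable {K R : Type*} [Field K] [Ring R] [Algebra K R]

/-- properties of the anti-involution -/
structure Sig (q : K) (bar : K →+* K) (σ : R → R) (u0 u1 u2 u3 : R) (e0 e1 e2 e3 : K) : Prop where
  hbq : bar q = q⁻¹
  hsub : ∀ x y, σ (x - y) = σ x - σ y
  hsmul : ∀ (k : K) x, σ (k • x) = bar k • σ x
  hmul : ∀ x y, σ (x * y) = σ y * σ x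
  hone : σ 1 = 1
  h0 : σ u0 = e0 • u0
  h1 : σ u1 = e1 • u1
  h2 : σ u2 = e2 • u2
  h3 : σ u3 = e3 • u3
  k03 : e0 * e3 = e1 * e2
  k02 : e0 * e2 = e1 * e1
  k13 : e1 * e3 = e2 * e2

variable {q : K} {bar : K →+* K} {σ : R → R} {u0 u1 u2 u3 p0 p1 z c : R} {e0 e1 e2 e3 : K}

theorem Sig.zero (s : Sig q bar σ u0 u1 u2 u3 e0 e1 e2 e3) : σ 0 = 0 := by
  have := s.hsub 0 0
  simpa using this

theorem Sig.mp1 (s : Sig q bar σ u0 u1 u2 u3 e0 e1 e2 e3) (h : QRel q u0 u1 u2 u3)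
    (hi : QId q u0 u1 u2 u3 p0 p1 z c) (hq : q ≠ 0) : σ p1 = (e1 * e3 * q⁻¹ ^ 2) • p1 := by
  simp only [hi.hp1, s.hsub, s.hsmul, s.hmul, s.h1, s.h2, s.h3, smul_mul_assoc, mul_smul_comm,
    map_pow, s.hbq, h.r13, smul_sub, smul_smul, ← s.k13]
  match_scalars <;> field_simp <;> ring

theorem Sig.mp0 (s : Sig q bar σ u0 u1 u2 u3 e0 e1 e2 e3) (h : QRel q u0 u1 u2 u3)
    (hi : QId q u0 u1 u2 u3 p0 p1 z c) (hq : q ≠ 0) : σ p0 = (e0 * e2 * q⁻¹ ^ 2) • p0 := by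
  simp only [hi.hp0, s.hsub, s.hsmul, s.hmul, s.h1, s.h2, s.h0, smul_mul_assoc, mul_smul_comm,
    map_pow, s.hbq, h.r02, smul_sub, smul_smul, ← s.k02]
  match_scalars <;> field_simp <;> ring

theorem Sig.mz (s : Sig q bar σ u0 u1 u2 u3 e0 e1 e2 e3) (h : QRel q u0 u1 u2 u3)
    (hi : QId q u0 u1 u2 u3 p0 p1 z c) (hq : q ≠ 0) : σ z = (e0 * e3 * q⁻¹ ^ 2) • z := by
  have k : e3 * e0 = e1 * e2 := by rw [mul_comm, s.k03]
  simp only [hi.hz, s.hsub, s.hsmul, s.hmul, s.h1, s.h2, s.h0, s.h3, smul_mul_assoc,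
    mul_smul_comm, map_pow, s.hbq, h.r03, h.r12, smul_sub, smul_smul, s.k03]
  match_scalars <;> field_simp <;>
    first | linear_combination k | linear_combination (1 - q ^ 4) * k

theorem Sig.mc (s : Sig q bar σ u0 u1 u2 u3 e0 e1 e2 e3) (h : QRel q u0 u1 u2 u3)
    (hi : QId q u0 u1 u2 u3 p0 p1 z c) (hq : q ≠ 0) :
    σ c = ((e0 * e3 * q⁻¹ ^ 2) ^ 2) • c := by
  rw [hi.hc]
  simp only [s.hsmul, s.hmul, s.mp1 h hi hq, s.mp0 h hi hq, smul_mul_assoc, mul_smul_comm,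
    map_pow, s.hbq, hi.p1p0, smul_smul]
  have : (e0 * e3 * q⁻¹ ^ 2) ^ 2 = e0 * e3 * (e1 * e2) * q⁻¹ ^ 4 := by
    rw [← s.k03]; ring
  rw [this]
  congr 1
  field_simp

theorem Sig.mSg (s : Sig q bar σ u0 u1 u2 u3 e0 e1 e2 e3) (h : QRel q u0 u1 u2 u3)
    (hi : QId q u0 u1 u2 u3 p0 p1 z c) (hq : q ≠ 0) (m : ℕ) :
    (e0 * e3 * q⁻¹ ^ 2) • σ (Sg z c m) = (e0 * e3 * q⁻¹ ^ 2) ^ m • Sg z c m ∧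
    σ (Sg z c (m + 1)) = (e0 * e3 * q⁻¹ ^ 2) ^ m • Sg z c (m + 1) := by
  have hz := s.mz h hi hq
  have hc := s.mc h hi hq
  have cz := hi.cz hq
  generalize e0 * e3 * q⁻¹ ^ 2 = ρ at *
  induction m with
  | zero => simp [Sg, s.zero, s.hone]
  | succ m ih =>
    refine ⟨by rw [ih.2, smul_smul, pow_succ'], ?_⟩
    have e1 : ρ ^ 2 • σ (Sg z c m) = ρ ^ (m + 1) • Sg z c m := by
      rw [pow_two, ← smul_smul, ih.1, smul_smul, pow_succ']
    rw [Sg_add_two, s.hsub, s.hmul, s.hmul, hz, hc, ih.2, mul_smul_comm, mul_smul_comm,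
      ← smul_mul_assoc (ρ ^ 2), e1, smul_mul_assoc, smul_mul_assoc, smul_smul,
      (Sg_comm z c z (Commute.refl z) cz.symm (m + 1)).eq,
      (Sg_comm z c c cz (Commute.refl c) m).eq, smul_sub, pow_succ']

theorem Sig.mXs (s : Sig q bar σ u0 u1 u2 u3 e0 e1 e2 e3) (h : QRel q u0 u1 u2 u3)
    (hi : QId q u0 u1 u2 u3 p0 p1 z c) (hq : q ≠ 0) (m : ℕ) :
    ∃ k : K, σ (Xs q z c u3 (u2 * p1) m) = k • Xs q z c u3 (u2 * p1) m := by
  refine ⟨e3 * (e0 * e3 * q⁻¹ ^ 2) ^ m * q ^ (2 * m), ?_⟩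
  obtain ⟨S1, S2⟩ := s.mSg h hi hq m
  have hv : σ (u2 * p1) = (e3 * (e0 * e3 * q⁻¹ ^ 2)) • (u2 * p1) := by
    rw [s.hmul, s.mp1 h hi hq, s.h2, smul_mul_assoc, mul_smul_comm, hi.p1u2, smul_smul, s.k03]
    congr 1; ring
  generalize e0 * e3 * q⁻¹ ^ 2 = ρ at *
  rw [← smul_smul, ← hi.P hq, Xs, s.hsub, s.hsmul, s.hmul, s.hmul, s.h3, S2, hv,
    mul_smul (e3) ρ, smul_mul_assoc, smul_mul_assoc, smul_mul_assoc, ← mul_smul_comm ρ, S1,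
    map_pow, map_inv₀, s.hbq, inv_inv]
  simp only [mul_smul_comm, smul_sub, smul_smul]
  congr 1
  congr 1
  ring

/-- exponents -/
def es : ℕ → ℕ
  | 0 => 0
  | (n + 1) => es n + 4 * n

variable {Zq : Subring K} {B : Idx → R} {ν : Idx → K}

theorem generic_main (s : Sig q bar σ u0 u1 u2 u3 e0 e1 e2 e3) (h : QRel q u0 u1 u2 u3)
    (hq : q ≠ 0) (hqZ : q ∈ Zq) (d : Dat Zq q bar σ (gE q u0 u1 u2 u3) B ν) (m : ℕ) :
    B (m + 1, 0, 0, m + 1) = q ^ m • (B (m + 1, 0, 0, m) * u0)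
      - q ^ (2 * m + 2) • (B (m, 1, 0, m) * u1) := by
  obtain ⟨p0, hp0⟩ : ∃ p0, p0 = u2 * u0 - q ^ 2 • (u1 * u1) := ⟨_, rfl⟩
  obtain ⟨p1, hp1⟩ : ∃ p1, p1 = u3 * u1 - q ^ 2 • (u2 * u2) := ⟨_, rfl⟩
  obtain ⟨z, hz⟩ : ∃ z, z = u3 * u0 - q ^ 2 • (u2 * u1) := ⟨_, rfl⟩
  obtain ⟨c, hc⟩ : ∃ c, c = q ^ 2 • (p0 * p1) := ⟨_, rfl⟩
  have hi := qid_of h hq p0 p1 z c hp1 hp0 hz hc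
  set X : ℕ → R := Xs q z c u3 (u2 * p1) with hX
  have B0 : B (0, 0, 0, 0) = 1 := by
    refine d.unique (k := 1) ?_ ?_
    · simp [gE, bexp]
    · simp [s.hone]
  have B1 : B (1, 0, 0, 0) = u3 := by
    refine d.unique (k := e3) ?_ s.h3
    simp [gE, bexp]
  have B2 : B (0, 1, 0, 0) = u2 := by
    refine d.unique (k := e2) ?_ s.h2
    simp [gE, bexp]
  have xs : ∀ m, B (m, 0, 0, m) = q ^ es m • Sg z c (m + 1) →
      (∀ k, m = k + 1 → B (k, 0, 0, k) = q ^ es k • Sg z c (k + 1)) →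
      B (m + 1, 0, 0, m) = q ^ (es m + 3 * m) • X m := by
    intro m hm hk
    rcases m with _ | k
    · rw [B1, hX]; simp [es, Xs, Sg]
    · specialize hk k rfl
      have l1 := lat_u3 hqZ (k + 1) (d.hL (k + 1, 0, 0, k + 1))
      have l2 := lat_u2 h hq hqZ k (lat_p1 h hi hq hqZ k (d.hL (k, 0, 0, k)))
      have l3 := Submodule.sub_mem _ l1 l2
      rw [sub_right_comm] at l3
      have e : q ^ (k + 1) • (u3 * B (k + 1, 0, 0, k + 1))
          - q ^ (2 * k + 3) • (u2 * q ^ (3 * k) • (p1 * B (k, 0, 0, k))) =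
          q ^ (es (k + 1) + 3 * (k + 1)) • X (k + 1) := by
        have P := hi.P hq (k + 1)
        rw [← hX] at P
        have : q ^ (es (k + 1) + 3 * (k + 1)) • X (k + 1) =
          q ^ (es (k + 1) + k + 1) • (q ^ (2 * (k + 1)) • X (k + 1)) := by
          rw [smul_smul]; congr 1; ring
        rw [this, ← P, hm, hk]
        simp only [mul_smul_comm, smul_sub, smul_smul, mul_assoc]
        congr 2
        · ring
        · rw [es]; ring
      rw [e] at l3
      obtain ⟨κ, hκ⟩ := s.mXs h hi hq (k + 1)
      refine d.unique (k := bar (q ^ (es (k + 1) + 3 * (k + 1))) * κ *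
        (q ^ (es (k + 1) + 3 * (k + 1)))⁻¹) l3 ?_
      rw [s.hsmul, hX, hκ, smul_smul, smul_smul]
      congr 1
      rw [inv_mul_cancel_right₀ (pow_ne_zero _ hq)]
  have ts : ∀ m, B (m + 1, 0, 0, m) = q ^ (es m + 3 * m) • X m →
      B (m + 1, 1, 0, m + 1) = q ^ (3 * m) • (B (m + 1, 0, 0, m) * p0) := by
    intro m hm
    have l := lat_p0 h hi hq hqZ m (d.hL (m + 1, 0, 0, m))
    obtain ⟨κ, hκ⟩ := s.mXs h hi hq m
    have e : q ^ (3 * m) • (B (m + 1, 0, 0, m) * p0) =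
        q ^ (3 * m + (es m + 3 * m)) • (X m * p0) := by
      rw [hm, smul_mul_assoc, smul_smul]; congr 1; ring
    rw [e] at l ⊢
    refine d.unique (k := bar (q ^ (3 * m + (es m + 3 * m))) * (e0 * e2 * q⁻¹ ^ 2) * κ *
        (q⁻¹ ^ (2 * m + 4)) * (q ^ (3 * m + (es m + 3 * m)))⁻¹) l ?_
    have pX := hi.p0X hq m
    rw [← hX] at pX hκ
    rw [s.hsmul, s.hmul, hκ, s.mp0 h hi hq, smul_mul_assoc, mul_smul_comm, pX]
    simp only [smul_smul]
    congr 1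
    rw [inv_mul_cancel_right₀ (pow_ne_zero _ hq)]
    ring
  have fin : ∀ m, B (m + 1, 0, 0, m) = q ^ (es m + 3 * m) • X m →
      (∀ k, m = k + 1 → B (k + 1, 0, 0, k) = q ^ (es k + 3 * k) • X k) →
      B (m + 1, 0, 0, m + 1) = q ^ es (m + 1) • Sg z c (m + 2) ∧
      B (m + 1, 0, 0, m + 1) = q ^ m • (B (m + 1, 0, 0, m) * u0)
        - q ^ (2 * m + 2) • (B (m, 1, 0, m) * u1) := by
    intro m hm hk
    have l1 := lat_u0 hqZ m (d.hL (m + 1, 0, 0, m))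
    have l2 := lat_u1 h hq hqZ m (d.hL (m, 1, 0, m))
    have l3 := Submodule.sub_mem _ l1 l2
    rw [sub_right_comm] at l3
    have e : q ^ m • (B (m + 1, 0, 0, m) * u0) - q ^ (2 * m + 2) • (B (m, 1, 0, m) * u1) =
        q ^ es (m + 1) • Sg z c (m + 2) := by
      rcases m with _ | k
      · simp only [zero_add, B1, B2, es, Sg, mul_zero, pow_zero, one_smul, mul_one, sub_zero, hz,
          add_zero]
      · rw [ts k (hk k rfl), hm, hk k rfl, hi.F1 hq k, ← hX]
        simp only [mul_smul_comm, smul_mul_assoc, smul_sub, smul_smul]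
        congr 2
        · simp only [es]; ring
        · simp only [es]; ring
    rw [e] at l3 ⊢
    have : B (m + 1, 0, 0, m + 1) = q ^ es (m + 1) • Sg z c (m + 2) := by
      refine d.unique (k := bar (q ^ es (m + 1)) * (e0 * e3 * q⁻¹ ^ 2) ^ (m + 1) *
        (q ^ es (m + 1))⁻¹) l3 ?_
      rw [s.hsmul, (s.mSg h hi hq (m + 1)).2, smul_smul, smul_smul]
      congr 1
      rw [inv_mul_cancel_right₀ (pow_ne_zero _ hq)]
    exact ⟨this, this⟩
  have all : ∀ m, B (m, 0, 0, m) = q ^ es m • Sg z c (m + 1) ∧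
      B (m + 1, 0, 0, m) = q ^ (es m + 3 * m) • X m ∧
      (∀ k, m = k + 1 → B (k, 0, 0, k) = q ^ es k • Sg z c (k + 1)) ∧
      (∀ k, m = k + 1 → B (k + 1, 0, 0, k) = q ^ (es k + 3 * k) • X k) := by
    intro m
    induction m with
    | zero =>
      have b0 : B (0, 0, 0, 0) = q ^ es 0 • Sg z c (0 + 1) := by simp [B0, es, Sg]
      exact ⟨b0, xs 0 b0 (by simp), by simp, by simp⟩
    | succ m ih =>
      obtain ⟨i1, i2, i3, i4⟩ := ih
      have f := (fin m i2 i4).1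
      have g : ∀ k, m + 1 = k + 1 → B (k, 0, 0, k) = q ^ es k • Sg z c (k + 1) := by
        intro k hk; obtain rfl : m = k := by omega
        exact i1
      refine ⟨f, xs (m + 1) f g, g, ?_⟩
      intro k hk; obtain rfl : m = k := by omega
      exact i2
  exact (fin m (all m).2.1 (all m).2.2.2).2

end main

section oppo
open MulOpposite
variable {K R : Type*} [Field K] [Ring R] [Algebra K R]
variable {q : K} {bar : K →+* K} {σ : R → R} {u0 u1 u2 u3 : R} {e0 e1 e2 e3 : K}
variable {Zq : Subring K} {E B : Idx → R} {ν : Idx → K}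

theorem QRel.opp (h : QRel q u0 u1 u2 u3) : QRel q (op u3) (op u2) (op u1) (op u0) := by
  refine ⟨?_, ?_, ?_, ?_, ?_, ?_⟩ <;>
    simp only [← op_mul, ← op_smul, ← op_sub]
  · rw [h.r23]
  · rw [h.r12]
  · rw [h.r01]
  · rw [h.r13]
  · rw [h.r02]
  · rw [h.r03]

theorem Sig.opp (s : Sig q bar σ u0 u1 u2 u3 e0 e1 e2 e3) :
    Sig q bar (fun x : Rᵐᵒᵖ => op (σ (unop x))) (op u3) (op u2) (op u1) (op u0) e3 e2 e1 e0 where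
  hbq := s.hbq
  hsub x y := by simp [s.hsub]
  hsmul k x := by simp [s.hsmul]
  hmul x y := by simp [s.hmul]
  hone := by simp [s.hone]
  h0 := by simp [s.h3]
  h1 := by simp [s.h2]
  h2 := by simp [s.h1]
  h3 := by simp [s.h0]
  k03 := by rw [mul_comm, s.k03, mul_comm]
  k02 := by rw [mul_comm, s.k13]
  k13 := by rw [mul_comm, s.k02]

def rv (a : Idx) : Idx := (a.2.2.2, a.2.2.1, a.2.1, a.1)

theorem rv_rv (a : Idx) : rv (rv a) = a := rfl

theorem rv_Sset {a b : Idx} (h : b ∈ Sset a) : rv b ∈ Sset (rv a) := by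
  obtain ⟨⟨s, r, h3, h2, h1, h0⟩, hne⟩ := h
  refine ⟨⟨r, s, h0, ?_, ?_, h3⟩, fun e => hne ?_⟩
  · simp only [rv]; omega
  · simp only [rv]; omega
  · rw [← rv_rv a, e, rv_rv]

theorem Lq_op {a : Idx} {x : R} (hx : x ∈ Lq Zq q E (rv a)) :
    op x ∈ Lq Zq q (fun b => op (E (rv b))) a := by
  unfold Lq at hx
  induction hx using Submodule.span_induction with
  | mem x hx =>
    obtain ⟨b, hb, rfl⟩ := hx
    exact Submodule.subset_span ⟨rv b, rv_Sset hb, by simp [rv_rv]⟩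
  | zero => exact Submodule.zero_mem _
  | add x y _ _ hx hy => rw [op_add]; exact Submodule.add_mem _ hx hy
  | smul c x _ hx => rw [op_smul]; exact Submodule.smul_mem _ c hx

theorem Dat.opp (d : Dat Zq q bar σ E B ν) :
    Dat Zq q bar (fun x : Rᵐᵒᵖ => op (σ (unop x))) (fun b => op (E (rv b)))
      (fun b => op (B (rv b))) (fun b => ν (rv b)) where
  hE := by
    have h1 := d.hE.comp rv (fun a b h => by rw [← rv_rv a, h, rv_rv])
    exact h1.map' (opLinearEquiv K : R ≃ₗ[K] Rᵐᵒᵖ).toLinearMap (LinearEquiv.ker _)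
  hadd x y := by simp [d.hadd]
  hsmul k x := by simp [d.hsmul]
  hL a := by rw [← op_sub]; exact Lq_op (d.hL (rv a))
  hσ a := by simp [d.hσ]
  hν a b hb := d.hν _ _ (rv_Sset hb)
  hν0 a := d.hν0 _
  hbar := d.hbar

theorem gE_op : gE q (op u3) (op u2) (op u1) (op u0) = fun b => op (gE q u0 u1 u2 u3 (rv b)) := by
  funext b
  simp only [gE, rv, bexp, op_smul, op_mul, op_pow, mul_assoc]
  congr 2
  ring

theorem generic_main' (s : Sig q bar σ u0 u1 u2 u3 e0 e1 e2 e3) (h : QRel q u0 u1 u2 u3)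
    (hq : q ≠ 0) (hqZ : q ∈ Zq) (d : Dat Zq q bar σ (gE q u0 u1 u2 u3) B ν) (m : ℕ) :
    B (m + 1, 0, 0, m + 1) = q ^ m • (u3 * B (m, 0, 0, m + 1))
      - q ^ (2 * m + 2) • (u2 * B (m, 0, 1, m)) := by
  have d' := d.opp
  rw [← gE_op] at d'
  have := generic_main s.opp h.opp hq hqZ d' m
  simp only [← op_mul, ← op_smul, ← op_sub, rv] at this
  exact op_injective this

theorem qrel_of (A : R) {t : K} (ht : t ≠ 0) (d0 : A * u0 - u0 * A = t • u1)
    (d1 : A * u1 - u1 * A = t • u2) (d2 : A * u2 - u2 * A = t • u3)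
    (r01 : u0 * u1 = (q⁻¹ ^ 2) • (u1 * u0)) (r12 : u1 * u2 = (q⁻¹ ^ 2) • (u2 * u1))
    (r23 : u2 * u3 = (q⁻¹ ^ 2) • (u3 * u2)) : QRel q u0 u1 u2 u3 := by
  have D : ∀ {x y x' y' : R}, A * x - x * A = t • x' → A * y - y * A = t • y' →
      A * (x * y) - (x * y) * A = t • (x' * y + x * y') := by
    intro x y x' y' hx hy
    rw [smul_add, ← smul_mul_assoc, ← mul_smul_comm, ← hx, ← hy]
    noncomm_ring
  have C : ∀ {x y : R}, t • x = t • y → x = y := by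
    intro x y hxy
    have := congrArg (fun w => t⁻¹ • w) hxy
    simpa [smul_smul, ht] using this
  have r02 : u0 * u2 = (q⁻¹ ^ 2) • (u2 * u0) - (1 - q⁻¹ ^ 2) • (u1 * u1) := by
    have e := D d0 d1
    rw [r01, mul_smul_comm, smul_mul_assoc, ← smul_sub, D d1 d0, smul_comm] at e
    have e := C e
    linear_combination (norm := module) -e
  have r13 : u1 * u3 = (q⁻¹ ^ 2) • (u3 * u1) - (1 - q⁻¹ ^ 2) • (u2 * u2) := by
    have e := D d1 d2
    rw [r12, mul_smul_comm, smul_mul_assoc, ← smul_sub, D d2 d1, smul_comm] at e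
    have e := C e
    linear_combination (norm := module) -e
  refine ⟨r01, r12, r23, r02, r13, ?_⟩
  have e := D d0 d2
  have e1 := D d2 d0
  have e2 := D d1 d1
  have e3 : t • (u1 * u2 + u0 * u3) = t • ((q⁻¹ ^ 2) • (u3 * u0 + u2 * u1)
      - (1 - q⁻¹ ^ 2) • (u2 * u1 + u1 * u2)) := by
    rw [← e, r02, smul_sub, smul_comm t, ← e1, smul_comm t, ← e2]
    simp only [mul_sub, sub_mul, mul_smul_comm, smul_mul_assoc, smul_sub]
    abel
  have e4 := C e3
  rw [r12] at e4
  linear_combination (norm := module) e4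
end oppo

section inst

theorem qq_ne : qq ≠ 0 := RatFunc.X_ne_zero

theorem ev_inj {p : Polynomial ℤ} (h : Polynomial.eval₂ (Int.castRingHom F) qq p = 0) : p = 0 := by
  have e : Polynomial.eval₂ (Int.castRingHom F) qq p =
      algebraMap (Polynomial ℚ) F (p.map (Int.castRingHom ℚ)) := by
    have : (algebraMap (Polynomial ℚ) F) (p.map (Int.castRingHom ℚ)) =
        ((algebraMap (Polynomial ℚ) F).comp (Polynomial.mapRingHom (Int.castRingHom ℚ))) p := rfl
    rw [this, ← Polynomial.coe_eval₂RingHom]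
    congr 1
    apply Polynomial.ringHom_ext
    · intro a; simp
    · simp [qq, RatFunc.algebraMap_X]
  rw [e] at h
  have h1 := (map_eq_zero_iff _ (IsFractionRing.injective (Polynomial ℚ) F)).1 h
  exact (Polynomial.map_eq_zero_iff (Int.cast_injective)).1 h1

def Zq : Subring F := (Polynomial.eval₂RingHom (Int.castRingHom F) qq).range

theorem qq_mem : qq ∈ Zq := ⟨Polynomial.X, by simp⟩

theorem bar_fix {bar : F →+* F} (hb : bar qq = qq⁻¹) (x : F) (hx : x ∈ Zq)
    (h : bar (qq * x) = qq * x) : qq * x = 0 := by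
  obtain ⟨p, rfl⟩ := hx
  have e0 : qq * Polynomial.eval₂RingHom (Int.castRingHom F) qq p =
      Polynomial.eval₂ (Int.castRingHom F) qq (Polynomial.X * p) := by simp
  rw [e0] at h ⊢
  by_cases hp : p = 0
  · simp [hp]
  exfalso
  set P := Polynomial.X * p with hP
  have hdeg : P.natDegree = p.natDegree + 1 := Polynomial.natDegree_X_mul hp
  have e1 : bar (Polynomial.eval₂ (Int.castRingHom F) qq P) =
      Polynomial.eval₂ (Int.castRingHom F) qq⁻¹ P := by
    rw [Polynomial.hom_eval₂, hb]
    congr 1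
    exact RingHom.ext_int _ _
  rw [e1] at h
  have e2 : Polynomial.eval₂ (Int.castRingHom F) qq P.reverse * qq⁻¹ ^ P.natDegree =
      Polynomial.eval₂ (Int.castRingHom F) qq⁻¹ P := by
    let _ : Invertible (qq⁻¹) := ⟨qq, mul_inv_cancel₀ qq_ne, inv_mul_cancel₀ qq_ne⟩
    exact Polynomial.eval₂_reverse_mul_pow (Int.castRingHom F) qq⁻¹ P
  rw [h] at e2
  have e3 : Polynomial.eval₂ (Int.castRingHom F) qq (Polynomial.X ^ P.natDegree * P - P.reverse)
      = 0 := by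
    rw [Polynomial.eval₂_sub, Polynomial.eval₂_mul, Polynomial.eval₂_X_pow, ← e2, mul_comm,
      mul_assoc, ← mul_pow, inv_mul_cancel₀ qq_ne, one_pow, mul_one, sub_self]
  have e4 := sub_eq_zero.1 (ev_inj e3)
  have hP0 : P ≠ 0 := mul_ne_zero Polynomial.X_ne_zero hp
  have e5 := congrArg Polynomial.natDegree e4
  rw [Polynomial.natDegree_X_pow_mul _ hP0] at e5
  have e6 := Polynomial.reverse_natDegree_le P
  omega

theorem qq_sq : (1 - (qq⁻¹) ^ 2 : F) ≠ 0 := by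
  intro h
  have h1 : Polynomial.eval₂ (Int.castRingHom F) qq (Polynomial.X ^ 2 - 1) = 0 := by
    have := qq_ne
    simp only [Polynomial.eval₂_sub, Polynomial.eval₂_X_pow, Polynomial.eval₂_one]
    field_simp at h
    rw [h, mul_zero]
  have h2 := congrArg (Polynomial.eval 2) (ev_inj h1)
  norm_num at h2

variable {bar : F →+* F} {σ : Sgen → Sgen} {B : Idx → Sgen}

theorem B_eq (hB : DCB bar σ B) {a : Idx} (ha : ∀ b, b ∉ Sset a) : B a = Ee a := by
  obtain ⟨φ, h1, h2⟩ := (hB a).1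
  have : φ = 0 := by
    rw [← Finsupp.support_eq_empty, Finset.eq_empty_iff_forall_notMem]
    exact fun b hb => ha b (h1 hb)
  rw [this, Finsupp.sum_zero_index] at h2
  exact sub_eq_zero.1 h2

theorem rel_S (hσ : SigmaHyp bar σ) (hB : DCB bar σ B) : QRel qq us0 us1 us2 us3 := by
  obtain ⟨hb, -, hadd, hmul, hsm, s0, s1, s2, s3⟩ := hσ
  have hq := qq_ne
  have r01 : us0 * us1 = (qq⁻¹ ^ 2) • (us1 * us0) := by
    have h := (hB (0, 0, 1, 1)).2
    rw [B_eq hB (by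
      rintro ⟨b3, b2, b1, b0⟩ hb'
      obtain ⟨s, r, hsr, h3, h2, h1, h0⟩ := of_mem_Sset hb'
      push_cast at *; omega)] at h
    simp [Ee, mon, bexp, Nnum, hmul, s0, s1] at h
    rw [← h, smul_smul, ← mul_pow, inv_mul_cancel₀ hq, one_pow, one_smul]
  have r12 : us1 * us2 = (qq⁻¹ ^ 2) • (us2 * us1) := by
    have h := (hB (0, 1, 1, 0)).2
    rw [B_eq hB (by
      rintro ⟨b3, b2, b1, b0⟩ hb'
      obtain ⟨s, r, hsr, h3, h2, h1, h0⟩ := of_mem_Sset hb'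
      push_cast at *; omega)] at h
    have e : qq ^ (-Nnum (0, 1, 1, 0)) = qq ^ 4 := by
      rw [← zpow_natCast]; congr 1
    rw [e] at h
    simp [Ee, mon, bexp, hmul, s2, s1] at h
    have h' := congrArg (fun x => qq⁻¹ ^ 6 • x) h
    simp only [smul_smul] at h'
    have e1 : qq⁻¹ ^ 6 * (qq ^ 2 * qq ^ 4) = 1 := by field_simp
    have e2 : qq⁻¹ ^ 6 * qq ^ 4 = qq⁻¹ ^ 2 := by field_simp
    first | rwa [e1, e2, one_smul] at h' | rwa [mul_comm (qq ^ 4), e1, e2, one_smul] at h'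
  have r23 : us2 * us3 = (qq⁻¹ ^ 2) • (us3 * us2) := by
    have h := (hB (1, 1, 0, 0)).2
    rw [B_eq hB (by
      rintro ⟨b3, b2, b1, b0⟩ hb'
      obtain ⟨s, r, hsr, h3, h2, h1, h0⟩ := of_mem_Sset hb'
      push_cast at *; omega)] at h
    have e : qq ^ (-Nnum (1, 1, 0, 0)) = qq ^ 8 := by
      rw [← zpow_natCast]; congr 1
    rw [e] at h
    simp [Ee, mon, bexp, hmul, s2, s3] at h
    have h' := congrArg (fun x => qq⁻¹ ^ 10 • x) h
    simp only [smul_smul] at h'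
    have e1 : qq⁻¹ ^ 10 * (qq ^ 4 * qq ^ 6) = 1 := by field_simp
    have e2 : qq⁻¹ ^ 10 * qq ^ 8 = qq⁻¹ ^ 2 := by field_simp
    first | rwa [e1, e2, one_smul] at h' | rwa [mul_comm (qq ^ 6), e1, e2, one_smul] at h'
  have ht := qq_sq
  have key : QRel qq u0 u1 u2 u3 := by
    refine qrel_of Aelt (pow_ne_zero 2 ht) ?_ ?_ ?_ (congrArg Subtype.val r01)
      (congrArg Subtype.val r12) (congrArg Subtype.val r23)
    · simp only [u0, u1, smul_smul, ← mul_pow, mul_inv_cancel₀ ht, one_pow, one_smul]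
      rfl
    · have e : (1 - qq⁻¹ ^ 2) ^ 2 * (1 - qq⁻¹ ^ 2)⁻¹ ^ 4 = (1 - qq⁻¹ ^ 2)⁻¹ ^ 2 := by
        generalize 1 - qq⁻¹ ^ 2 = t at ht; field_simp
      simp only [u1, u2, smul_smul, e, mul_smul_comm, smul_mul_assoc]
      exact (smul_sub _ (Aelt * v1) (v1 * Aelt)).symm
    · have e : (1 - qq⁻¹ ^ 2) ^ 2 * (1 - qq⁻¹ ^ 2)⁻¹ ^ 6 = (1 - qq⁻¹ ^ 2)⁻¹ ^ 4 := by
        generalize 1 - qq⁻¹ ^ 2 = t at ht; field_simp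
      simp only [u3, u2, smul_smul, e, mul_smul_comm, smul_mul_assoc]
      exact (smul_sub _ (Aelt * v2) (v2 * Aelt)).symm
  exact ⟨r01, r12, r23, Subtype.ext key.r02, Subtype.ext key.r13, Subtype.ext key.r03⟩

theorem sig_S (hσ : SigmaHyp bar σ) :
    Sig qq bar σ us0 us1 us2 us3 1 (qq ^ 2) (qq ^ 4) (qq ^ 6) := by
  obtain ⟨hb, hbij, hadd, hmul, hsm, s0, s1, s2, s3⟩ := hσ
  refine ⟨hb, ?_, hsm, hmul, ?_, by rw [s0, one_smul], s1, s2, s3, by ring, by ring, by ring⟩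
  · intro x y
    have := hadd (x - y) y
    have e : x - y + y = x := sub_add_cancel x y
    rw [e] at this
    exact eq_sub_of_add_eq this.symm
  · obtain ⟨y, hy⟩ := hbij.2 1
    have := hmul y 1
    rw [mul_one, hy, mul_one] at this
    exact this.symm

theorem N_const {a b : Idx} (h : b ∈ Sset a) : Nnum b = Nnum a := by
  obtain ⟨⟨s, r, h3, h2, h1, h0⟩, -⟩ := h
  simp only [Nnum, h3, h2, h1, h0]
  ring

theorem dat_S (hPBW : LinearIndependent F mon) (hσ : SigmaHyp bar σ) (hB : DCB bar σ B) :
    Dat Zq qq bar σ (gE qq us0 us1 us2 us3) B (fun a => qq ^ (-Nnum a)) := by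
  obtain ⟨hb, hbij, hadd, hmul, hsm, s0, s1, s2, s3⟩ := hσ
  refine ⟨?_, hadd, hsm, ?_, fun a => (hB a).2, fun a b h => by simp only [N_const h],
    fun a => zpow_ne_zero _ qq_ne, bar_fix hb⟩
  · exact hPBW.units_smul (fun a => Units.mk0 (qq ^ bexp a) (pow_ne_zero _ qq_ne))
  · intro a
    obtain ⟨φ, h1, h2⟩ := (hB a).1
    change B a - Ee a ∈ Lq Zq qq Ee a
    rw [h2]
    refine Submodule.sum_mem _ fun b hb' => ?_
    have := Submodule.smul_mem (Lq Zq qq Ee a)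
      (⟨Polynomial.eval₂ (Int.castRingHom F) qq (φ b), ⟨φ b, rfl⟩⟩ : Zq)
      (Submodule.subset_span ⟨b, h1 hb', rfl⟩)
    rw [Subring.smul_def] at this
    simp only [smul_smul] at this
    change (qq * Polynomial.eval₂ (Int.castRingHom F) qq (φ b)) • Ee b ∈ _
    rwa [mul_comm qq]

theorem flip1 (hσ : SigmaHyp bar σ) {a b d : Idx} {x y : Sgen} {i j : ℤ} {k l k' l' : ℤ}
    (hB : DCB bar σ B) (hx : σ x = qq ^ i • x) (hy : σ y = qq ^ j • y)
    (h : B a = qq ^ k • (B b * x) - qq ^ l • (B d * y))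
    (hk : k' = Nnum a - Nnum b - k + i) (hl : l' = Nnum a - Nnum d - l + j) :
    B a = qq ^ k' • (x * B b) - qq ^ l' • (y * B d) := by
  have S := sig_S hσ
  have e := congrArg σ h
  rw [(hB a).2, S.hsub, S.hsmul, S.hsmul, S.hmul, S.hmul, hx, hy, (hB b).2, (hB d).2] at e
  have e' := congrArg (fun w => qq ^ Nnum a • w) e
  have hq := qq_ne
  simp only [smul_smul, mul_smul_comm, smul_mul_assoc, smul_sub, map_zpow₀, S.hbq, inv_zpow',
    ← zpow_add₀ hq, add_neg_cancel, zpow_zero, one_smul] at e'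
  rw [e', hk, hl]
  congr 3 <;> ring

theorem flip2 (hσ : SigmaHyp bar σ) {a b d : Idx} {x y : Sgen} {i j : ℤ} {k l k' l' : ℤ}
    (hB : DCB bar σ B) (hx : σ x = qq ^ i • x) (hy : σ y = qq ^ j • y)
    (h : B a = qq ^ k • (x * B b) - qq ^ l • (y * B d))
    (hk : k' = Nnum a - Nnum b - k + i) (hl : l' = Nnum a - Nnum d - l + j) :
    B a = qq ^ k' • (B b * x) - qq ^ l' • (B d * y) := by
  have S := sig_S hσ
  have e := congrArg σ h
  rw [(hB a).2, S.hsub, S.hsmul, S.hsmul, S.hmul, S.hmul, hx, hy, (hB b).2, (hB d).2] at e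
  have e' := congrArg (fun w => qq ^ Nnum a • w) e
  have hq := qq_ne
  simp only [smul_smul, mul_smul_comm, smul_mul_assoc, smul_sub, map_zpow₀, S.hbq, inv_zpow',
    ← zpow_add₀ hq, add_neg_cancel, zpow_zero, one_smul] at e'
  rw [e', hk, hl]
  congr 3 <;> ring

theorem Bz_nat (B : Idx → Sgen) (a b c d : ℕ) :
    Bz B ((a : ℤ), (b : ℤ), (c : ℤ), (d : ℤ)) = B (a, b, c, d) := by
  simp [Bz]

end inst

/-- For every `n ≥ 1` the dual canonical basis elements satisfy
`B[n,0,0,n] = q^{n−1} B[n,0,0,n−1] u₀ − q^{2n} B[n−1,1,0,n−1] u₁`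
`= q^{3n−1} u₀ B[n,0,0,n−1] − q^{2n−2} u₁ B[n−1,1,0,n−1]`
`= q^{n−1} u₃ B[n−1,0,0,n] − q^{2n} u₂ B[n−1,0,1,n−1]`
`= q^{3n−1} B[n−1,0,0,n] u₃ − q^{2n−2} B[n−1,0,1,n−1] u₂`. -/
theorem stmt12 (bar : F →+* F) (σ : Sgen → Sgen) (B : Idx → Sgen)
    (hPBW : LinearIndependent F mon) (hσ : SigmaHyp bar σ) (hB : DCB bar σ B) (n : ℕ) (hn : 1 ≤ n) :
    Bz B ((n : ℤ), 0, 0, (n : ℤ))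
        = qq ^ ((n : ℤ) - 1) • (Bz B ((n : ℤ), 0, 0, (n : ℤ) - 1) * us0)
          - qq ^ (2 * (n : ℤ)) • (Bz B ((n : ℤ) - 1, 1, 0, (n : ℤ) - 1) * us1) ∧
    Bz B ((n : ℤ), 0, 0, (n : ℤ))
        = qq ^ (3 * (n : ℤ) - 1) • (us0 * Bz B ((n : ℤ), 0, 0, (n : ℤ) - 1))
          - qq ^ (2 * (n : ℤ) - 2) • (us1 * Bz B ((n : ℤ) - 1, 1, 0, (n : ℤ) - 1)) ∧
    Bz B ((n : ℤ), 0, 0, (n : ℤ))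
        = qq ^ ((n : ℤ) - 1) • (us3 * Bz B ((n : ℤ) - 1, 0, 0, (n : ℤ)))
          - qq ^ (2 * (n : ℤ)) • (us2 * Bz B ((n : ℤ) - 1, 0, 1, (n : ℤ) - 1)) ∧
    Bz B ((n : ℤ), 0, 0, (n : ℤ))
        = qq ^ (3 * (n : ℤ) - 1) • (Bz B ((n : ℤ) - 1, 0, 0, (n : ℤ)) * us3)
          - qq ^ (2 * (n : ℤ) - 2) • (Bz B ((n : ℤ) - 1, 0, 1, (n : ℤ) - 1) * us2) := by
  obtain ⟨m, rfl⟩ : ∃ m, n = m + 1 := ⟨n - 1, by omega⟩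
  have f1 := generic_main (sig_S hσ) (rel_S hσ hB) qq_ne qq_mem (dat_S hPBW hσ hB) m
  have f3 := generic_main' (sig_S hσ) (rel_S hσ hB) qq_ne qq_mem (dat_S hPBW hσ hB) m
  have z1 : ((m + 1 : ℕ) : ℤ) - 1 = ((m : ℕ) : ℤ) := by push_cast; ring
  have g0 : Bz B (((m + 1 : ℕ) : ℤ), 0, 0, ((m + 1 : ℕ) : ℤ)) = B (m + 1, 0, 0, m + 1) :=
    Bz_nat B (m + 1) 0 0 (m + 1)
  have g1 : Bz B (((m + 1 : ℕ) : ℤ), 0, 0, ((m : ℕ) : ℤ)) = B (m + 1, 0, 0, m) :=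
    Bz_nat B (m + 1) 0 0 m
  have g2 : Bz B (((m : ℕ) : ℤ), 1, 0, ((m : ℕ) : ℤ)) = B (m, 1, 0, m) := Bz_nat B m 1 0 m
  have g3 : Bz B (((m : ℕ) : ℤ), 0, 0, ((m + 1 : ℕ) : ℤ)) = B (m, 0, 0, m + 1) :=
    Bz_nat B m 0 0 (m + 1)
  have g4 : Bz B (((m : ℕ) : ℤ), 0, 1, ((m : ℕ) : ℤ)) = B (m, 0, 1, m) := Bz_nat B m 0 1 m
  simp only [z1, g0, g1, g2, g3, g4]
  have c1 : qq ^ (2 * ((m + 1 : ℕ) : ℤ)) = qq ^ (2 * m + 2) := by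
    rw [← zpow_natCast qq (2 * m + 2)]; congr 1
  have F1 : B (m + 1, 0, 0, m + 1) = qq ^ (m : ℤ) • (B (m + 1, 0, 0, m) * us0)
      - qq ^ (2 * ((m + 1 : ℕ) : ℤ)) • (B (m, 1, 0, m) * us1) := by
    rw [c1, zpow_natCast]; exact f1
  have F3 : B (m + 1, 0, 0, m + 1) = qq ^ (m : ℤ) • (us3 * B (m, 0, 0, m + 1))
      - qq ^ (2 * ((m + 1 : ℕ) : ℤ)) • (us2 * B (m, 0, 1, m)) := by
    rw [c1, zpow_natCast]; exact f3
  have hσ' := hσ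
  obtain ⟨hb, hbij, hadd, hmul, hsm, s0, s1, s2, s3⟩ := hσ'
  have t0 : σ us0 = qq ^ (0 : ℤ) • us0 := by rw [s0, zpow_zero, one_smul]
  refine ⟨F1, flip1 hσ hB t0 (j := 2) s1 F1 ?_ ?_, F3, flip2 hσ hB (i := 6) (j := 4) s3 s2 F3 ?_ ?_⟩
  all_goals
    simp only [Nnum]
    push_cast
    ring
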